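/- arXiv:1201.2922 — 5 statements merged into one kernel-verified Lean document; each statement's English description precedes it below -/
import Mathlib

section
/- Let 0 < d_0 ≤ d_1 ≤ ⋯ ≤ d_n and S = ℂ[α_0,…,α_n]. Consider tuples φ̄ = (φ_1,…,φ_n) with φ_i ∈ S homogeneous of degree d_i − d_0, identified with their coefficient vectors in the finite-dimensional vector space B = Π_{i=1}^n S_{d_i−d_0}, and let I(φ̄) = (α_1^{d_1+1} − φ_1 α_0^{d_0+1}, …, α_n^{d_n+1} − φ_n α_0^{d_0+1}) ⊂ S. Then there exists a nonzero polynomial function P on B such that for every φ̄ with P(φ̄) ≠ 0, the ideal I(φ̄) is a radical ideal; in particular the set of φ̄ for which I(φ̄) is radical contains a nonempty Zariski-open subset of B. -/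
/-!
Write `f_i = α_i^{d_i+1} − φ_i α_0^{d_0+1}`. The idea is to pass to the affine chart `α_0 = 1`,
where the zero scheme of the `f_i` is finite over the space of tuples `φ̄`, and to use that the
locus where a finite family is unramified over its base is open.

*Reduction to the chart.* Modulo `α_0` the `f_i` become pure powers of distinct variables, so
`α_0, f_1, …, f_n` is a regular sequence; by a permutation argument (`nzd_mod_span`) `α_0` is a
nonzerodivisor modulo `I(φ̄)` (`X_zero_nzd`). Since `I(φ̄)` and its radical are homogeneous, it
follows that `I(φ̄)` is radical as soon as `I(φ̄) + (α_0 − 1)` is (`isRadical_of_affIdeal`).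

*Jacobian criterion.* If the determinant of `∂f_i/∂α_j`, `1 ≤ i, j ≤ n`, is a unit modulo
`I(φ̄) + (α_0 − 1)`, then the Kähler differentials of that quotient vanish; an unramified algebra
of finite type over a field is reduced (`affIdeal_isRadical`).

*Openness.* Take for `φ̄` the universal tuple over the ring `R` of polynomials in its coefficients,
and let `J` be generated by the `f_i`, `α_0 − 1` and the Jacobian. Each `φ_i` has degree at most
`d_i`, so the quotient by `J` is a finite `R`-module (`finite_quotient`). Its fibre at the tuple
`φ_i = α_0^{d_i − d_0}` is zero (`special_mem`), so Nakayama's lemma gives `P ∈ R` with value `1` at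
that tuple which annihilates the quotient, that is, `P ∈ J`. At any tuple with `P(φ̄) ≠ 0` the
specialization of `J` is then the unit ideal, and the Jacobian criterion applies.
-/

open MvPolynomial

attribute [local instance] MvPolynomial.gradedAlgebra

/-! ### Multiplication by `X 0` modulo the ideal -/

/-- If `x` is a nonzerodivisor and `f k` is a nonzerodivisor modulo `x` and any set of other `f i`,
then `x` is a nonzerodivisor modulo the `f i`: regular sequences can be permuted. -/
lemma nzd_mod_span {S ι : Type*} [CommRing S] [DecidableEq ι] (x : S)
    (hx : ∀ g, x * g = 0 → g = 0) (f : ι → S)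
    (hf : ∀ (t : Finset ι) (k : ι), k ∉ t → ∀ h, h * f k ∈ Ideal.span (f '' t) ⊔ Ideal.span {x} →
      h ∈ Ideal.span (f '' t) ⊔ Ideal.span {x})
    (s : Finset ι) : ∀ g, x * g ∈ Ideal.span (f '' s) → g ∈ Ideal.span (f '' s) := by
  induction s using Finset.induction_on with
  | empty =>
    intro g hg
    simp only [Finset.coe_empty, Set.image_empty, Ideal.span_empty, Ideal.mem_bot] at hg ⊢
    exact hx g hg
  | insert k t hk ih =>
    intro g hg
    rw [Finset.coe_insert, Set.image_insert_eq, Ideal.mem_span_insert] at hg ⊢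
    obtain ⟨h, z, hz, e⟩ := hg
    have h1 : h ∈ Ideal.span (f '' t) ⊔ Ideal.span {x} := by
      apply hf t k hk
      have : h * f k = -z + x * g := by rw [e]; ring
      rw [this]
      exact Ideal.add_mem _ (Ideal.mem_sup_left (neg_mem hz))
        (Ideal.mem_sup_right (Ideal.mul_mem_right _ _ (Ideal.mem_span_singleton_self x)))
    obtain ⟨y, hy, w, hw, e2⟩ := Submodule.mem_sup.1 h1
    obtain ⟨u, rfl⟩ := Ideal.mem_span_singleton'.1 hw
    refine ⟨u, g - u * f k, ih _ ?_, by ring⟩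
    have : x * (g - u * f k) = y * f k + z := by
      rw [mul_sub, e, ← e2]; ring
    rw [this]
    exact Ideal.add_mem _ (Ideal.mul_mem_right _ _ hy) hz

/-- `X k` is a nonzerodivisor modulo an ideal generated by powers of other variables. -/
lemma mem_of_mul_X_pow_mem {σ R : Type*} [CommRing R] (s : Set (σ × ℕ)) (k : σ) (e : ℕ)
    (hk : ∀ p ∈ s, p.1 ≠ k) (h : MvPolynomial σ R)
    (hh : h * X k ^ e ∈ Ideal.span ((fun p : σ × ℕ => (X p.1 ^ p.2 : MvPolynomial σ R)) '' s)) :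
    h ∈ Ideal.span ((fun p : σ × ℕ => (X p.1 ^ p.2 : MvPolynomial σ R)) '' s) := by
  have key : ((fun p : σ × ℕ => (X p.1 ^ p.2 : MvPolynomial σ R)) '' s) =
      (fun m => monomial m (1 : R)) '' ((fun p : σ × ℕ => Finsupp.single p.1 p.2) '' s) := by
    rw [Set.image_image]
    simp only [X_pow_eq_monomial]
  rw [key, mem_ideal_span_monomial_image] at hh ⊢
  intro m hm
  obtain ⟨_, ⟨p, hp, rfl⟩, hle⟩ := hh (m + Finsupp.single k e) (by
    rw [mem_support_iff, X_pow_eq_monomial, coeff_mul_monomial, mul_one]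
    exact mem_support_iff.1 hm)
  refine ⟨_, ⟨p, hp, rfl⟩, ?_⟩
  rw [Finsupp.single_le_iff] at hle ⊢
  simpa [Finsupp.single_apply, (hk p hp).symm] using hle

/-! ### The ideals and the Jacobian -/

section defs

variable {n : ℕ} {R : Type*} [CommRing R]

/-- The generators `α_i^{d_i+1} − φ_i α_0^{d_0+1}`, over an arbitrary coefficient ring. -/
noncomputable def gen (d : Fin (n + 1) → ℕ) (φ : Fin n → MvPolynomial (Fin (n + 1)) R)
    (i : Fin n) : MvPolynomial (Fin (n + 1)) R :=
  X i.succ ^ (d i.succ + 1) - φ i * X 0 ^ (d 0 + 1)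

/-- The ideal of the affine chart `α_0 = 1`, kept inside the same polynomial ring. -/
noncomputable def affIdeal (d : Fin (n + 1) → ℕ) (φ : Fin n → MvPolynomial (Fin (n + 1)) R) :
    Ideal (MvPolynomial (Fin (n + 1)) R) :=
  Ideal.span (Set.range (gen d φ)) ⊔ Ideal.span {X 0 - 1}

/-- The Jacobian determinant of the generators in the affine coordinates `α_1, …, α_n`. -/
noncomputable def jac (d : Fin (n + 1) → ℕ) (φ : Fin n → MvPolynomial (Fin (n + 1)) R) :
    MvPolynomial (Fin (n + 1)) R :=
  (Matrix.of fun i j : Fin n => pderiv j.succ (gen d φ i)).det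

lemma gen_mem (d : Fin (n + 1) → ℕ) (φ : Fin n → MvPolynomial (Fin (n + 1)) R) (i : Fin n) :
    gen d φ i ∈ affIdeal d φ :=
  Ideal.mem_sup_left (Ideal.subset_span ⟨i, rfl⟩)

lemma X_zero_sub_one_mem (d : Fin (n + 1) → ℕ) (φ : Fin n → MvPolynomial (Fin (n + 1)) R) :
    X 0 - 1 ∈ affIdeal d φ :=
  Ideal.mem_sup_right (Ideal.mem_span_singleton_self _)

/-- Modulo `X 0` the generators become pure powers of distinct variables. -/
lemma span_gen_sup_X_zero (d : Fin (n + 1) → ℕ) (φ : Fin n → MvPolynomial (Fin (n + 1)) R)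
    (t : Set (Fin n)) :
    Ideal.span (gen d φ '' t) ⊔ Ideal.span {X 0} =
      Ideal.span ((fun p : Fin (n + 1) × ℕ => (X p.1 ^ p.2 : MvPolynomial (Fin (n + 1)) R)) ''
        (insert (0, 1) ((fun i : Fin n => (i.succ, d i.succ + 1)) '' t))) := by
  have hX : ∀ (q : MvPolynomial (Fin (n + 1)) R) , q * X 0 ^ (d 0 + 1) ∈
      Ideal.span {(X 0 : MvPolynomial (Fin (n + 1)) R)} := fun q => by
    rw [pow_succ, ← mul_assoc]
    exact Ideal.mul_mem_left _ _ (Ideal.mem_span_singleton_self _)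
  rw [Set.image_insert_eq, Set.image_image]
  apply le_antisymm
  · have h0 : Ideal.span {(X 0 : MvPolynomial (Fin (n + 1)) R)} ≤ Ideal.span
        (insert (X 0 ^ 1) ((fun i : Fin n => (X i.succ ^ (d i.succ + 1) :
          MvPolynomial (Fin (n + 1)) R)) '' t)) := by
      rw [pow_one]
      exact Ideal.span_mono (by simp)
    refine sup_le (Ideal.span_le.2 ?_) h0
    rintro _ ⟨i, hi, rfl⟩
    exact Ideal.sub_mem _ (Ideal.subset_span (Or.inr ⟨i, hi, rfl⟩)) (h0 (hX _))
  · rw [Ideal.span_le]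
    rintro _ (rfl | ⟨i, hi, rfl⟩)
    · rw [pow_one]
      exact Ideal.mem_sup_right (Ideal.mem_span_singleton_self _)
    · have : (X i.succ ^ (d i.succ + 1) : MvPolynomial (Fin (n + 1)) R) =
          gen d φ i + φ i * X 0 ^ (d 0 + 1) := by simp [gen]
      change (X i.succ ^ (d i.succ + 1) : MvPolynomial (Fin (n + 1)) R) ∈ _
      rw [this]
      exact Ideal.add_mem _ (Ideal.mem_sup_left (Ideal.subset_span ⟨i, hi, rfl⟩))
        (Ideal.mem_sup_right (hX _))

/-- `X 0` is a nonzerodivisor modulo the ideal of the generators. -/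
lemma X_zero_nzd [IsDomain R] (d : Fin (n + 1) → ℕ) (φ : Fin n → MvPolynomial (Fin (n + 1)) R)
    (g : MvPolynomial (Fin (n + 1)) R) (hg : X 0 * g ∈ Ideal.span (Set.range (gen d φ))) :
    g ∈ Ideal.span (Set.range (gen d φ)) := by
  have := nzd_mod_span (X 0 : MvPolynomial (Fin (n + 1)) R)
    (fun g hg => (mul_eq_zero.1 hg).resolve_left (X_ne_zero 0)) (gen d φ) ?_ Finset.univ g
  · simpa using this (by simpa using hg)
  · intro t k hk h hh
    have hk' : h * X k.succ ^ (d k.succ + 1) ∈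
        Ideal.span (gen d φ '' t) ⊔ Ideal.span {X 0} := by
      have : h * X k.succ ^ (d k.succ + 1) = h * gen d φ k + h * φ k * X 0 ^ d 0 * X 0 := by
        simp only [gen]; ring
      rw [this]
      exact Ideal.add_mem _ hh (Ideal.mem_sup_right
        (Ideal.mul_mem_left _ _ (Ideal.mem_span_singleton_self _)))
    rw [span_gen_sup_X_zero] at hk' ⊢
    refine mem_of_mul_X_pow_mem _ k.succ (d k.succ + 1) ?_ h hk'
    rintro p (rfl | ⟨i, hi, rfl⟩)
    · exact (Fin.succ_ne_zero k).symm
    · intro e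
      exact hk (Fin.succ_injective _ e ▸ hi)

/-! ### From the affine chart to the homogeneous ideal -/

lemma gen_isHomogeneous (d : Fin (n + 1) → ℕ) (hmono : Monotone d)
    (φ : Fin n → MvPolynomial (Fin (n + 1)) R)
    (hφ : ∀ i : Fin n, (φ i).IsHomogeneous (d i.succ - d 0)) (i : Fin n) :
    (gen d φ i).IsHomogeneous (d i.succ + 1) := by
  have h0 : d 0 ≤ d i.succ := hmono (Fin.zero_le _)
  refine (isHomogeneous_X_pow _ _).sub ?_
  have := (hφ i).mul (isHomogeneous_X_pow (R := R) (0 : Fin (n + 1)) (d 0 + 1))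
  convert this using 1
  omega

lemma homogeneousComponent_X_mul {σ : Type*} (i : σ) (k : ℕ) (h : MvPolynomial σ R) :
    homogeneousComponent (k + 1) (X i * h) = X i * homogeneousComponent k h := by
  classical
  ext m
  rw [coeff_homogeneousComponent, coeff_X_mul', coeff_X_mul']
  by_cases hm : i ∈ m.support
  · have hle : Finsupp.single i 1 ≤ m := by
      rw [Finsupp.single_le_iff]
      exact Nat.one_le_iff_ne_zero.2 (Finsupp.mem_support_iff.1 hm)
    have hdeg : m.degree = (m - Finsupp.single i 1).degree + 1 := by
      conv_lhs => rw [← tsub_add_cancel_of_le hle]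
      simp
    simp [hm, coeff_homogeneousComponent, hdeg]
  · simp [hm]

/-- For a homogeneous ideal modulo which `X i` is a nonzerodivisor, passing to the chart `X i = 1`
loses nothing for homogeneous elements. -/
lemma mem_of_mem_sup_X_sub_one {σ : Type*} (i : σ) (I : Ideal (MvPolynomial σ R))
    (hI : I.IsHomogeneous (homogeneousSubmodule σ R))
    (hnzd : ∀ g, X i * g ∈ I → g ∈ I) (g : MvPolynomial σ R) (k : ℕ) (hg : g.IsHomogeneous k)
    (hmem : g ∈ I ⊔ Ideal.span {X i - 1}) : g ∈ I := by
  obtain ⟨y, hy, w, hw, e⟩ := Submodule.mem_sup.1 hmem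
  obtain ⟨h, rfl⟩ := Ideal.mem_span_singleton'.1 hw
  have hdiff : g - X i * h + h ∈ I := by
    have : g - X i * h + h = y := by rw [← e]; ring
    rwa [this]
  have hcomp : ∀ l, homogeneousComponent l g - homogeneousComponent l (X i * h) +
      homogeneousComponent l h ∈ I := fun l => by
    have := homogeneousComponent_mem_of_mem hI hdiff l
    rwa [map_add, map_sub] at this
  have hg' : ∀ l, l ≠ k → homogeneousComponent l g = 0 := fun l hl => by
    rw [homogeneousComponent_of_mem hg, if_neg hl]
  have hX0 : homogeneousComponent 0 (X i * h) = 0 := by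
    classical
    rw [homogeneousComponent_zero, coeff_X_mul']
    simp
  -- The components of `h` below degree `k` lie in `I`, by ascending induction.
  have low : ∀ l, l < k → homogeneousComponent l h ∈ I := by
    intro l
    induction l with
    | zero =>
      intro hl
      have := hcomp 0
      rwa [hg' 0 hl.ne, hX0, sub_zero, zero_add] at this
    | succ l ih =>
      intro hl
      have := hcomp (l + 1)
      rw [hg' _ hl.ne, homogeneousComponent_X_mul, zero_sub] at this
      have h2 := Ideal.mul_mem_left I (X i) (ih (by omega))
      simpa using Ideal.add_mem _ this h2
  -- The components from degree `k` on lie in `I`, by descending induction from the total degree.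
  have high : ∀ a l, k ≤ l → h.totalDegree < l + a → homogeneousComponent l h ∈ I := by
    intro a
    induction a with
    | zero =>
      intro l _ hl
      rw [homogeneousComponent_eq_zero _ _ (by simpa using hl)]
      exact I.zero_mem
    | succ a ih =>
      intro l hl hla
      have h1 := ih (l + 1) (by omega) (by omega)
      have := hcomp (l + 1)
      rw [hg' _ (by omega), homogeneousComponent_X_mul, zero_sub] at this
      apply hnzd
      have h3 := Ideal.sub_mem _ h1 this
      simpa using h3
  have hk := hcomp k
  have hhk := high (h.totalDegree + 1) k le_rfl (by omega)
  have hself : homogeneousComponent k g = g := by rw [homogeneousComponent_of_mem hg, if_pos rfl]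
  have hXk : homogeneousComponent k (X i * h) ∈ I := by
    cases k with
    | zero => rw [hX0]; exact I.zero_mem
    | succ l =>
      rw [homogeneousComponent_X_mul]
      exact Ideal.mul_mem_left _ _ (low l (by omega))
  rw [hself] at hk
  have := Ideal.add_mem _ (Ideal.sub_mem _ hk hhk) hXk
  simpa using this

/-- If the ideal of the affine chart is radical, so is the homogeneous ideal. -/
lemma isRadical_of_affIdeal [IsDomain R] (d : Fin (n + 1) → ℕ) (hmono : Monotone d)
    (φ : Fin n → MvPolynomial (Fin (n + 1)) R)
    (hφ : ∀ i : Fin n, (φ i).IsHomogeneous (d i.succ - d 0))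
    (h : (affIdeal d φ).IsRadical) : (Ideal.span (Set.range (gen d φ))).IsRadical := by
  have hI : (Ideal.span (Set.range (gen d φ))).IsHomogeneous
      (homogeneousSubmodule (Fin (n + 1)) R) := by
    apply Ideal.homogeneous_span
    rintro _ ⟨i, rfl⟩
    exact ⟨_, gen_isHomogeneous d hmono φ hφ i⟩
  intro g hg
  rw [mem_iff_homogeneousComponent_mem hI]
  intro k
  have hk := homogeneousComponent_mem_of_mem hI.radical hg k
  refine mem_of_mem_sup_X_sub_one 0 _ hI (X_zero_nzd d φ) _ k
    (homogeneousComponent_isHomogeneous _ _) (h ?_)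
  exact Ideal.radical_mono le_sup_left hk

/-! ### The Jacobian criterion -/

lemma derivation_sum_apply {ι S A M : Type*} [CommRing S] [CommRing A] [Algebra S A]
    [AddCommGroup M] [Module S M] [Module A M] (s : Finset ι) (D : ι → Derivation S A M) (a : A) :
    (∑ i ∈ s, D i) a = ∑ i ∈ s, D i a := by
  classical
  induction s using Finset.induction_on with
  | empty => simp
  | insert i s hi ih => rw [Finset.sum_insert hi, Finset.sum_insert hi, Derivation.add_apply, ih]

/-- The chain rule for a derivation of a polynomial ring into a module. -/
lemma derivation_eq_sum {σ M : Type*} [Fintype σ] [AddCommGroup M]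
    [Module R M] [Module (MvPolynomial σ R) M] [IsScalarTower R (MvPolynomial σ R) M]
    (D : Derivation R (MvPolynomial σ R) M) (p : MvPolynomial σ R) :
    D p = ∑ i, pderiv i p • D (X i) := by
  classical
  have : D = ∑ i, (LinearMap.toSpanSingleton (MvPolynomial σ R) M (D (X i))).compDer
      (pderiv i) := by
    apply derivation_ext
    intro j
    simp [derivation_sum_apply, pderiv_X, Pi.single_apply, ite_smul]
  conv_lhs => rw [this]
  simp [derivation_sum_apply]

/-- Cramer's rule for module-valued vectors. -/
lemma det_smul_eq_zero {ι S M : Type*} [Fintype ι] [DecidableEq ι] [CommRing S] [AddCommGroup M]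
    [Module S M] (A : Matrix ι ι S) (v : ι → M) (h : ∀ i, ∑ j, A i j • v j = 0) (k : ι) :
    A.det • v k = 0 := by
  have h1 : ∑ i, A.adjugate k i • ∑ j, A i j • v j = 0 := by simp [h]
  simp_rw [Finset.smul_sum, smul_smul] at h1
  rw [Finset.sum_comm] at h1
  simp_rw [← Finset.sum_smul, ← Matrix.mul_apply, Matrix.adjugate_mul] at h1
  simpa [Matrix.smul_apply, Matrix.one_apply] using h1

end defs

/-- If the Jacobian is a unit on the affine chart, the chart is unramified over the field, hence
reduced. -/
lemma affIdeal_isRadical {n : ℕ} {K : Type*} [Field K] (d : Fin (n + 1) → ℕ)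
    (φ : Fin n → MvPolynomial (Fin (n + 1)) K)
    (h : (1 : MvPolynomial (Fin (n + 1)) K) ∈ affIdeal d φ ⊔ Ideal.span {jac d φ}) :
    (affIdeal d φ).IsRadical := by
  set I := affIdeal d φ with hI
  let B := MvPolynomial (Fin (n + 1)) K ⧸ I
  let D : Derivation K (MvPolynomial (Fin (n + 1)) K) (Ω[B⁄K]) :=
    (KaehlerDifferential.D K B).compAlgebraMap (MvPolynomial (Fin (n + 1)) K)
  have hD : ∀ p, D p = KaehlerDifferential.D K B (Ideal.Quotient.mk I p) := fun _ => rfl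
  have hDI : ∀ p ∈ I, D p = 0 := fun p hp => by
    rw [hD, Ideal.Quotient.eq_zero_iff_mem.2 hp, map_zero]
  have hsmulI : ∀ p ∈ I, ∀ ω : Ω[B⁄K], p • ω = 0 := fun p hp ω => by
    have : (Ideal.Quotient.mk I p) • ω = p • ω := algebraMap_smul B p ω
    rw [← this, Ideal.Quotient.eq_zero_iff_mem.2 hp]
    exact zero_smul B ω
  have hX0 : D (X 0) = 0 := by
    have := hDI _ (X_zero_sub_one_mem d φ)
    rwa [map_sub, Derivation.map_one_eq_zero, sub_zero] at this
  have hdet : ∀ k : Fin n, jac d φ • D (X k.succ) = 0 := by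
    apply det_smul_eq_zero (v := fun j : Fin n => D (X j.succ))
    intro i
    have := hDI _ (gen_mem d φ i)
    rw [derivation_eq_sum, Fin.sum_univ_succ, hX0, smul_zero, zero_add] at this
    exact this
  obtain ⟨y, hy, w, hw, e⟩ := Submodule.mem_sup.1 h
  obtain ⟨u, rfl⟩ := Ideal.mem_span_singleton'.1 hw
  have hX : ∀ j, D (X j) = 0 := by
    intro j
    refine Fin.cases hX0 (fun k => ?_) j
    rw [← one_smul (MvPolynomial (Fin (n + 1)) K) (D (X k.succ)), ← e, add_smul, mul_smul, hdet,
      smul_zero, add_zero, hsmulI y hy]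
  have hD0 : ∀ b, KaehlerDifferential.D K B b = 0 := by
    intro b
    obtain ⟨p, rfl⟩ := Ideal.Quotient.mk_surjective b
    rw [← hD, derivation_eq_sum]
    simp [hX]
  have hsub : Subsingleton (Ω[B⁄K]) := by
    rw [← Submodule.subsingleton_iff B, ← subsingleton_iff_bot_eq_top,
      ← KaehlerDifferential.span_range_derivation, eq_comm, Submodule.span_eq_bot]
    rintro _ ⟨b, rfl⟩
    exact hD0 b
  have : Algebra.FormallyUnramified K B := ⟨hsub⟩
  rw [Ideal.isRadical_iff_quotient_reduced]
  exact Algebra.FormallyUnramified.isReduced_of_field K B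

/-! ### Finiteness of the affine chart over the coefficient ring -/

/-- Modulo `X 0 = 1` the relation `X i ^ (d i + 1) = φ i` lowers degrees, so the monomials of degree
at most `∑ d i` span the quotient. -/
lemma finite_quotient {n : ℕ} {R : Type*} [CommRing R] (d : Fin (n + 1) → ℕ)
    (φ : Fin n → MvPolynomial (Fin (n + 1)) R)
    (hφ : ∀ i : Fin n, (φ i).IsHomogeneous (d i.succ - d 0))
    (J : Ideal (MvPolynomial (Fin (n + 1)) R)) (hJ : affIdeal d φ ≤ J) :
    Module.Finite R (MvPolynomial (Fin (n + 1)) R ⧸ J) := by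
  let q : MvPolynomial (Fin (n + 1)) R →ₗ[R] (MvPolynomial (Fin (n + 1)) R ⧸ J) :=
    (Ideal.Quotient.mkₐ R J).toLinearMap
  have hq : ∀ p, q p = Ideal.Quotient.mk J p := fun _ => rfl
  let s : Set (Fin (n + 1) →₀ ℕ) := {m | m.degree ≤ ∑ i : Fin n, d i.succ}
  have hs : s.Finite := Finsupp.finite_of_degree_le _
  let N := Submodule.span R ((fun m => q (monomial m 1)) '' s)
  have hX0 : Ideal.Quotient.mk J (X 0) = 1 := by
    rw [← map_one (Ideal.Quotient.mk J), Ideal.Quotient.eq]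
    exact hJ (X_zero_sub_one_mem d φ)
  have hXi : ∀ i : Fin n, Ideal.Quotient.mk J (X i.succ ^ (d i.succ + 1)) =
      Ideal.Quotient.mk J (φ i) := by
    intro i
    have := Ideal.Quotient.eq_zero_iff_mem.2 (hJ (gen_mem d φ i))
    rw [gen, map_sub, sub_eq_zero] at this
    rw [this, map_mul, map_pow, hX0, one_pow, mul_one]
  -- Every monomial reduces to one of bounded degree, by induction on the degree.
  have key : ∀ (a : ℕ) (m : Fin (n + 1) →₀ ℕ), m.degree = a → q (monomial m 1) ∈ N := by
    intro a
    induction a using Nat.strong_induction_on with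
    | _ a ih =>
    intro m hm
    by_cases hle : m.degree ≤ ∑ i : Fin n, d i.succ
    · exact Submodule.subset_span ⟨m, hle, rfl⟩
    by_cases h0 : 1 ≤ m 0
    · obtain ⟨m', rfl⟩ := le_iff_exists_add'.1 (Finsupp.single_le_iff.2 h0)
      have : q (monomial (m' + Finsupp.single 0 1) 1) = q (monomial m' 1) := by
        rw [hq, hq, ← mul_one (1 : R), ← monomial_mul, map_mul]
        change _ * Ideal.Quotient.mk J (X 0) = _
        rw [hX0, mul_one, mul_one]
      rw [this]
      refine ih m'.degree ?_ m' rfl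
      rw [← hm]; simp
    · have : ∃ i : Fin n, d i.succ + 1 ≤ m i.succ := by
        by_contra! hcon
        apply hle
        rw [Finsupp.degree_eq_sum, Fin.sum_univ_succ]
        have h00 : m 0 = 0 := by omega
        rw [h00, zero_add]
        exact Finset.sum_le_sum fun i _ => Nat.lt_succ_iff.1 (hcon i)
      obtain ⟨i, hi⟩ := this
      -- `X i.succ ^ (d i.succ + 1)` becomes `φ i`, of smaller degree `d i.succ - d 0`.
      obtain ⟨m', rfl⟩ := le_iff_exists_add'.1 (Finsupp.single_le_iff.2 hi)
      have : q (monomial (m' + Finsupp.single i.succ (d i.succ + 1)) 1) =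
          q (monomial m' 1 * φ i) := by
        rw [hq, hq, ← mul_one (1 : R), ← monomial_mul, map_mul, map_mul, mul_one,
          ← X_pow_eq_monomial, hXi]
      rw [this, (φ i).as_sum, Finset.mul_sum, map_sum]
      refine Submodule.sum_mem _ fun l hl => ?_
      have hdl : l.degree = d i.succ - d 0 := by
        rw [Finsupp.degree_eq_weight_one]
        exact hφ i (mem_support_iff.1 hl)
      have hmon : monomial m' (1 : R) * monomial l (coeff l (φ i)) =
          coeff l (φ i) • monomial (m' + l) 1 := by
        rw [monomial_mul, smul_monomial, one_mul, smul_eq_mul, mul_one]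
      rw [hmon, map_smul]
      refine Submodule.smul_mem _ _ (ih (m' + l).degree ?_ _ rfl)
      rw [← hm]
      simp only [map_add, hdl, Finsupp.degree_single]
      omega
  refine ⟨(hs.image fun m => q (monomial m 1)).toFinset, ?_⟩
  rw [Set.Finite.coe_toFinset, eq_top_iff]
  rintro b -
  obtain ⟨p, rfl⟩ := Ideal.Quotient.mk_surjective b
  rw [← hq, p.as_sum, map_sum]
  refine Submodule.sum_mem _ fun l _ => ?_
  have hmon : monomial l (coeff l p) = coeff l p • monomial l (1 : R) := by
    rw [smul_monomial, smul_eq_mul, mul_one]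
  rw [hmon, map_smul]
  exact Submodule.smul_mem _ _ (key _ l rfl)

/-! ### Specialization -/

lemma map_gen {n : ℕ} {R S : Type*} [CommRing R] [CommRing S] (f : R →+* S)
    (d : Fin (n + 1) → ℕ) (φ : Fin n → MvPolynomial (Fin (n + 1)) R) (i : Fin n) :
    map f (gen d φ i) = gen d (fun i => map f (φ i)) i := by
  simp [gen]

lemma map_jac {n : ℕ} {R S : Type*} [CommRing R] [CommRing S] (f : R →+* S)
    (d : Fin (n + 1) → ℕ) (φ : Fin n → MvPolynomial (Fin (n + 1)) R) :
    map f (jac d φ) = jac d (fun i => map f (φ i)) := by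
  rw [jac, jac, RingHom.map_det]
  congr 1
  ext1 i j
  simp [← map_gen, pderiv_map]

lemma map_ideal {n : ℕ} {R S : Type*} [CommRing R] [CommRing S] (f : R →+* S)
    (d : Fin (n + 1) → ℕ) (φ : Fin n → MvPolynomial (Fin (n + 1)) R) :
    (affIdeal d φ ⊔ Ideal.span {jac d φ}).map (map f) =
      affIdeal d (fun i => map f (φ i)) ⊔ Ideal.span {jac d (fun i => map f (φ i))} := by
  simp only [affIdeal, Ideal.map_sup, Ideal.map_span, Set.image_singleton, map_jac, map_sub, map_X,
    map_one, ← Set.range_comp]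
  congr 4
  ext1 i
  exact map_gen f d φ i

/-- The tuple `φ_i = α_0^{d_i - d_0}` gives `α_i^{d_i+1} − α_0^{d_i+1}`, whose Jacobian
`∏ (d_i + 1) α_i^{d_i}` is a unit on the chart `α_0 = 1`. -/
lemma special_mem {n : ℕ} {K : Type*} [Field K] [CharZero K] (d : Fin (n + 1) → ℕ) :
    (1 : MvPolynomial (Fin (n + 1)) K) ∈
      affIdeal d (fun i : Fin n => X 0 ^ (d i.succ - d 0)) ⊔
        Ideal.span {jac d (fun i : Fin n => X 0 ^ (d i.succ - d 0))} := by
  set φ : Fin n → MvPolynomial (Fin (n + 1)) K := fun i : Fin n => X 0 ^ (d i.succ - d 0) with hφ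
  set J := affIdeal d φ ⊔ Ideal.span {jac d φ} with hJ
  have hjac : jac d φ = ∏ i : Fin n, (((d i.succ + 1 : ℕ) : MvPolynomial (Fin (n + 1)) K) *
      X i.succ ^ d i.succ) := by
    rw [jac, ← Matrix.det_diagonal]
    congr 1
    ext1 i j
    rw [Matrix.of_apply, Matrix.diagonal_apply, gen, hφ]
    simp only [map_sub, Derivation.leibniz, Derivation.leibniz_pow, pderiv_X]
    by_cases hij : i = j
    · subst hij
      simp [(Fin.succ_ne_zero _).symm]
    · simp [hij, (Fin.succ_ne_zero _).symm]
  have hX0 : Ideal.Quotient.mk J (X 0) = 1 := by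
    rw [← map_one (Ideal.Quotient.mk J), Ideal.Quotient.eq]
    exact Ideal.mem_sup_left (X_zero_sub_one_mem d φ)
  have hunit : IsUnit (Ideal.Quotient.mk J (jac d φ)) := by
    rw [hjac, map_prod, IsUnit.prod_univ_iff]
    intro i
    rw [map_mul]
    refine IsUnit.mul ?_ ?_
    · have : IsUnit ((d i.succ + 1 : ℕ) : K) := isUnit_iff_ne_zero.2 (Nat.cast_ne_zero.2 (by omega))
      simpa using this.map ((Ideal.Quotient.mk J).comp C)
    · have : Ideal.Quotient.mk J (gen d φ i) = 0 :=
        Ideal.Quotient.eq_zero_iff_mem.2 (Ideal.mem_sup_left (gen_mem d φ i))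
      have hφi : φ i = X 0 ^ (d i.succ - d 0) := rfl
      rw [gen, map_sub, sub_eq_zero, hφi] at this
      simp only [map_mul, map_pow, hX0, one_pow, mul_one] at this
      rw [map_pow]
      exact IsUnit.of_mul_eq_one _ (by rw [← pow_succ]; exact this)
  have hzero : Ideal.Quotient.mk J (jac d φ) = 0 := Ideal.Quotient.eq_zero_iff_mem.2
    (Ideal.mem_sup_right (Ideal.mem_span_singleton_self _))
  rw [hzero] at hunit
  rw [← Ideal.Quotient.eq_zero_iff_mem, map_one]
  exact (isUnit_zero_iff.1 hunit).symm

/-- The universal tuple: `φ_i` is the homogeneous form of degree `d_i − d_0` whose coefficients are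
independent indeterminates. -/
noncomputable def univTuple (n : ℕ) (K : Type*) [CommRing K] (d : Fin (n + 1) → ℕ) (i : Fin n) :
    MvPolynomial (Fin (n + 1)) (MvPolynomial (Fin n × (Fin (n + 1) →₀ ℕ)) K) :=
  ∑ m ∈ Finset.finsuppAntidiag Finset.univ (d i.succ - d 0), monomial m (X (i, m))

lemma univTuple_isHomogeneous (n : ℕ) (K : Type*) [CommRing K] (d : Fin (n + 1) → ℕ) (i : Fin n) :
    (univTuple n K d i).IsHomogeneous (d i.succ - d 0) := by
  refine IsHomogeneous.sum _ _ _ fun m hm => isHomogeneous_monomial _ ?_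
  rw [Finsupp.degree_eq_sum]
  exact (Finset.mem_finsuppAntidiag.1 hm).1

/-- Every homogeneous tuple of the right degrees is the specialization of the universal one at its
coefficients. -/
lemma map_univTuple {n : ℕ} {K : Type*} [CommRing K] (d : Fin (n + 1) → ℕ)
    (φ : Fin n → MvPolynomial (Fin (n + 1)) K)
    (hφ : ∀ i : Fin n, (φ i).IsHomogeneous (d i.succ - d 0)) (i : Fin n) :
    map (eval (fun p : Fin n × (Fin (n + 1) →₀ ℕ) => coeff p.2 (φ p.1))) (univTuple n K d i)
      = φ i := by
  classical
  rw [univTuple, map_sum]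
  simp only [map_monomial, eval_X]
  conv_rhs => rw [(φ i).as_sum]
  symm
  apply Finset.sum_subset
  · intro m hm
    rw [Finset.mem_finsuppAntidiag]
    refine ⟨?_, Finset.subset_univ _⟩
    rw [← Finsupp.degree_eq_sum, Finsupp.degree_eq_weight_one]
    exact hφ i (mem_support_iff.1 hm)
  · intro m _ hm
    rw [notMem_support_iff.1 hm, monomial_zero]

theorem general_tuple_gives_radical (n : ℕ) (hn : 1 ≤ n)
    (d : Fin (n + 1) → ℕ) (hmono : Monotone d) (hpos : 0 < d 0) :
    ∃ P : MvPolynomial (Fin n × ((Fin (n + 1)) →₀ ℕ)) ℂ,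
      (∃ φ : Fin n → MvPolynomial (Fin (n + 1)) ℂ,
        (∀ i : Fin n, (φ i).IsHomogeneous (d i.succ - d 0)) ∧
        eval (fun p => coeff p.2 (φ p.1)) P ≠ 0) ∧
      ∀ φ : Fin n → MvPolynomial (Fin (n + 1)) ℂ,
        (∀ i : Fin n, (φ i).IsHomogeneous (d i.succ - d 0)) →
        eval (fun p => coeff p.2 (φ p.1)) P ≠ 0 →
        (Ideal.span (Set.range fun i : Fin n =>
          X i.succ ^ (d i.succ + 1) - φ i * X 0 ^ (d 0 + 1))).IsRadical := by
  set Φ := univTuple n ℂ d with hΦ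
  set J := affIdeal d Φ ⊔ Ideal.span {jac d Φ} with hJ
  let φ₀ : Fin n → MvPolynomial (Fin (n + 1)) ℂ := fun i => X 0 ^ (d i.succ - d 0)
  have hφ₀ : ∀ i : Fin n, (φ₀ i).IsHomogeneous (d i.succ - d 0) := fun i =>
    isHomogeneous_X_pow _ _
  have hmap : ∀ φ : Fin n → MvPolynomial (Fin (n + 1)) ℂ,
      (∀ i : Fin n, (φ i).IsHomogeneous (d i.succ - d 0)) →
      J.map (map (eval (fun p : Fin n × (Fin (n + 1) →₀ ℕ) => coeff p.2 (φ p.1)))) =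
        affIdeal d φ ⊔ Ideal.span {jac d φ} := by
    intro φ hφ
    rw [hJ, map_ideal]
    simp only [hΦ, map_univTuple d φ hφ]
  let ev := eval (fun p : Fin n × (Fin (n + 1) →₀ ℕ) => coeff p.2 (φ₀ p.1))
  have hfin : Module.Finite _ (MvPolynomial (Fin (n + 1)) _ ⧸ J) :=
    finite_quotient d Φ (univTuple_isHomogeneous n ℂ d) J le_sup_left
  -- The fibre of the finite module at the special point vanishes.
  have hone : (1 : MvPolynomial (Fin (n + 1)) (MvPolynomial (Fin n × (Fin (n + 1) →₀ ℕ)) ℂ)) ∈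
      J ⊔ (RingHom.ker ev).map C := by
    have hsurj : Function.Surjective (map (σ := Fin (n + 1)) ev) :=
      map_surjective _ fun c => ⟨C c, by simp [ev]⟩
    have h1 := special_mem (K := ℂ) d
    rw [← hmap φ₀ hφ₀, ← map_one (map ev), Ideal.mem_map_iff_of_surjective _ hsurj] at h1
    obtain ⟨y, hy, e⟩ := h1
    rw [← ker_map]
    refine Submodule.mem_sup.2 ⟨y, hy, 1 - y, ?_, add_sub_cancel _ _⟩
    rw [RingHom.mem_ker, map_sub, e, sub_self]
  have hle : (⊤ : Submodule (MvPolynomial (Fin n × (Fin (n + 1) →₀ ℕ)) ℂ)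
      (MvPolynomial (Fin (n + 1)) (MvPolynomial (Fin n × (Fin (n + 1) →₀ ℕ)) ℂ) ⧸ J)) ≤
      RingHom.ker ev • ⊤ := by
    have htop : (RingHom.ker ev).map (algebraMap _ (MvPolynomial (Fin (n + 1))
        (MvPolynomial (Fin n × (Fin (n + 1) →₀ ℕ)) ℂ) ⧸ J)) = ⊤ := by
      rw [Ideal.eq_top_iff_one]
      obtain ⟨y, hy, w, hw, e⟩ := Submodule.mem_sup.1 hone
      have h2 := Ideal.mem_map_of_mem (Ideal.Quotient.mk J) hw
      rw [Ideal.map_map] at h2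
      have h3 : Ideal.Quotient.mk J w = 1 := by
        rw [← map_one (Ideal.Quotient.mk J), ← e, map_add, Ideal.Quotient.eq_zero_iff_mem.2 hy,
          zero_add]
      rw [h3] at h2
      exact h2
    -- For an ideal of the base ring, `I • ⊤` in an algebra is the extension of `I`.
    rw [Ideal.smul_top_eq_map, htop]
    exact le_rfl
  obtain ⟨P, hP, hP0⟩ := Submodule.exists_sub_one_mem_and_smul_eq_zero_of_fg_of_le_smul
    (RingHom.ker ev) ⊤ hfin.fg_top hle
  have hPJ : C P ∈ J := by
    have := hP0 1 trivial
    rw [← Ideal.Quotient.eq_zero_iff_mem, ← this, Algebra.smul_def, mul_one]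
    rfl
  refine ⟨P, ⟨φ₀, hφ₀, ?_⟩, ?_⟩
  · rw [RingHom.mem_ker, map_sub, map_one, sub_eq_zero] at hP
    change ev P ≠ 0
    rw [hP]
    exact one_ne_zero
  · intro φ hφ hne
    apply isRadical_of_affIdeal d hmono φ hφ
    apply affIdeal_isRadical
    rw [← hmap φ hφ]
    have h1 := Ideal.mem_map_of_mem
      (map (σ := Fin (n + 1)) (eval (fun p : Fin n × (Fin (n + 1) →₀ ℕ) => coeff p.2 (φ p.1)))) hPJ
    rw [map_C] at h1
    rw [← Ideal.eq_top_iff_one]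
    exact Ideal.eq_top_of_isUnit_mem _ h1 ((isUnit_iff_ne_zero.2 hne).map C)
end

section
/- Let 0 < d_0 ≤ d_1 ≤ ⋯ ≤ d_n and for each i = 1,…,n let ζ_i ∈ ℂ be a primitive (d_i+1)-th root of unity. Then the ideal I = (α_1^{d_1+1} − α_0^{d_1+1}, …, α_n^{d_n+1} − α_0^{d_n+1}) ⊂ ℂ[α_0,…,α_n] is a radical ideal, and its zero set in ℙ^n consists of exactly (d_1+1)(d_2+1)⋯(d_n+1) distinct points, namely the points [1 : ζ_1^{a_1} : ⋯ : ζ_n^{a_n}] for 0 ≤ a_i ≤ d_i. -/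
/-!
The zero set and the count are elementary; the content is that the ideal is radical. Regard
`α_0` as a parameter `t` by passing to the polynomial ring in `α_1, …, α_n` over the domain
`ℂ[t]`. There `α_i ^ m - t ^ m = ∏ j < m, (α_i - ζ_i ^ j * t)` is, with `m = d_i + 1`, the monic
polynomial vanishing on the `m`-element set `S_i = {ζ_i ^ j * t}`, so the combinatorial
Nullstellensatz over `ℂ[t]` says that every polynomial vanishing on the grid `∏ S_i` lies in the
ideal generated by the `α_i ^ m - t ^ m` (`mem_gridIdeal_of_eval_eq_zero`). Since `ℂ[t]` is
reduced, membership of a power of `p` in the ideal forces `p` to vanish on the grid.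
-/

open MvPolynomial

/-- `x ^ m - y ^ m` factors over a domain containing `ℂ` as a product indexed by the powers of a
primitive root, without repetition. -/
lemma pow_sub_pow_eq_prod_range {A : Type*} [CommRing A] [IsDomain A] [Algebra ℂ A]
    {z : ℂ} {m : ℕ} (hm : 0 < m) (hz : IsPrimitiveRoot z m) (x y : A) :
    x ^ m - y ^ m = ∏ j ∈ Finset.range m, (x - algebraMap ℂ A (z ^ j) * y) := by
  have hz' : IsPrimitiveRoot (algebraMap ℂ A z) m :=
    hz.map_of_injective (FaithfulSMul.algebraMap_injective ℂ A)
  have : NeZero m := ⟨hm.ne'⟩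
  rw [hz'.pow_sub_pow_eq_prod_sub_mul x y hm]
  symm
  refine Finset.prod_nbij (fun j => algebraMap ℂ A z ^ j) ?_ ?_ ?_ ?_
  · intro j _
    rw [Polynomial.mem_nthRootsFinset hm, ← pow_mul, mul_comm, pow_mul, hz'.pow_eq_one, one_pow]
  · intro i hi j hj h
    exact hz'.pow_inj (by simpa using hi) (by simpa using hj) h
  · intro w hw
    obtain ⟨j, hj, rfl⟩ := hz'.eq_pow_of_pow_eq_one
      ((Polynomial.mem_nthRootsFinset hm 1).1 hw)
    exact ⟨j, by simpa using hj, rfl⟩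
  · intro j _
    simp

/-- The combinatorial Nullstellensatz over `ℂ[t]`, on the grid of points whose `i`-th coordinate
is `ζ_i ^ j * t` for some `j < m_i`. -/
lemma mem_gridIdeal_of_eval_eq_zero {n : ℕ} (m : Fin n → ℕ) (hm : ∀ i, 0 < m i)
    (ζ : Fin n → ℂ) (hζ : ∀ i, IsPrimitiveRoot (ζ i) (m i))
    (f : MvPolynomial (Fin n) (Polynomial ℂ))
    (hf : ∀ a : Fin n → ℕ,
      eval (fun i => Polynomial.C (ζ i ^ a i) * Polynomial.X) f = 0) :
    f ∈ Ideal.span (Set.range fun i : Fin n =>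
      (X i : MvPolynomial (Fin n) (Polynomial ℂ)) ^ m i - C Polynomial.X ^ m i) := by
  classical
  obtain ⟨h, -, hh⟩ := combinatorial_nullstellensatz_exists_linearCombination
    (fun i => (Finset.range (m i)).image
      fun j => Polynomial.C (ζ i ^ j) * (Polynomial.X : Polynomial ℂ))
    (fun i => (Finset.nonempty_range_iff.2 (hm i).ne').image _) f (by
      intro x hx
      have hx' : ∀ i, ∃ j, Polynomial.C (ζ i ^ j) * Polynomial.X = x i := fun i => by
        obtain ⟨j, -, hj⟩ := Finset.mem_image.1 (hx i)
        exact ⟨j, hj⟩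
      choose a ha using hx'
      rw [← hf a]
      congr 2
      exact (funext ha).symm)
  rw [hh, Finsupp.linearCombination_apply]
  refine Ideal.sum_mem _ fun i _ => Ideal.mul_mem_left _ _ (Ideal.subset_span ⟨i, ?_⟩)
  simp only
  rw [pow_sub_pow_eq_prod_range (hm i) (hζ i), Finset.prod_image]
  · refine Finset.prod_congr rfl fun j _ => ?_
    rw [map_mul, IsScalarTower.algebraMap_apply ℂ (Polynomial ℂ), algebraMap_eq,
      Polynomial.algebraMap_eq]
  · intro j hj k hk hjk
    exact (hζ i).pow_inj (by simpa using hj) (by simpa using hk)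
      (Polynomial.C_injective (mul_right_cancel₀ Polynomial.X_ne_zero hjk))

/-- Radicality, with arbitrary positive exponents `m_i`: pass to `ℂ[t]`-coefficients, apply the
grid criterion, and return along the inverse isomorphism. -/
lemma isRadical_span_pow_sub_pow {n : ℕ} (m : Fin n → ℕ) (hm : ∀ i, 0 < m i)
    (ζ : Fin n → ℂ) (hζ : ∀ i, IsPrimitiveRoot (ζ i) (m i)) :
    (Ideal.span (Set.range fun i : Fin n =>
      (X i.succ : MvPolynomial (Fin (n + 1)) ℂ) ^ m i - X 0 ^ m i)).IsRadical := by
  -- `φ` sends `α_0` to `t`, and `ψ` is its inverse; only `ψ ∘ φ = id` is needed.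
  let φ : MvPolynomial (Fin (n + 1)) ℂ →ₐ[ℂ] MvPolynomial (Fin n) (Polynomial ℂ) :=
    aeval (Fin.cons (C Polynomial.X) X)
  let ψ : MvPolynomial (Fin n) (Polynomial ℂ) →+* MvPolynomial (Fin (n + 1)) ℂ :=
    eval₂Hom (Polynomial.aeval (X 0 : MvPolynomial (Fin (n + 1)) ℂ)).toRingHom
      fun i => X i.succ
  have hψφ : ∀ p, ψ (φ p) = p := by
    have : ψ.comp φ.toRingHom = RingHom.id _ := by
      apply MvPolynomial.ringHom_ext
      · intro r
        simp [φ, ψ, IsScalarTower.algebraMap_apply ℂ (Polynomial ℂ), algebraMap_eq]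
      · intro i
        refine Fin.cases ?_ (fun j => ?_) i <;> simp [φ, ψ]
    exact fun p => RingHom.congr_fun this p
  rintro p ⟨k, hk⟩
  have hφp := mem_gridIdeal_of_eval_eq_zero m hm ζ hζ (φ p) (by
    intro a
    -- `θ` substitutes a point of the grid; its target `ℂ[t]` is a domain and it kills the
    -- generators, so it kills `p` as soon as it kills `p ^ k`.
    let θ : MvPolynomial (Fin (n + 1)) ℂ →+* Polynomial ℂ :=
      (eval fun i => Polynomial.C (ζ i ^ a i) * Polynomial.X).comp φ.toRingHom
    have hle : Ideal.span (Set.range fun i : Fin n =>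
        (X i.succ : MvPolynomial (Fin (n + 1)) ℂ) ^ m i - X 0 ^ m i) ≤ RingHom.ker θ := by
      rw [Ideal.span_le]
      rintro _ ⟨i, rfl⟩
      have h1 : ((Polynomial.C (ζ i) : Polynomial ℂ) ^ a i) ^ m i = 1 := by
        rw [← pow_mul, mul_comm, pow_mul, ← map_pow, (hζ i).pow_eq_one, map_one, one_pow]
      simp [θ, φ, RingHom.mem_ker, mul_pow, h1]
    have h0 : θ p ^ k = 0 := by rw [← map_pow]; exact hle hk
    exact eq_zero_of_pow_eq_zero h0)
  have := Ideal.mem_map_of_mem ψ hφp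
  rw [hψφ, Ideal.map_span, ← Set.range_comp] at this
  have hgen : (ψ ∘ fun i : Fin n =>
      (X i : MvPolynomial (Fin n) (Polynomial ℂ)) ^ m i - C Polynomial.X ^ m i) =
      fun i => X i.succ ^ m i - X 0 ^ m i := by
    funext i
    simp [ψ]
  rwa [hgen] at this


/-- The ideal `I = (α_1^{d_1+1} − α_0^{d_1+1}, …, α_n^{d_n+1} − α_0^{d_n+1})` is radical,
and its zero set in `ℙ^n` consists of exactly `(d_1+1)⋯(d_n+1)` distinct points, namely
`[1 : ζ_1^{a_1} : ⋯ : ζ_n^{a_n}]` for `0 ≤ a_i ≤ d_i`, where `ζ_i` is a primitive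
`(d_i+1)`-th root of unity. (Points of `ℙ^n` are represented by their nonzero
representative vectors in `ℂ^{n+1}`, up to scalar.) -/
theorem radical_ideal_of_roots_of_unity (n : ℕ) (hn : 1 ≤ n)
    (d : Fin (n + 1) → ℕ) (hmono : Monotone d) (hpos : 0 < d 0)
    (ζ : Fin n → ℂ) (hζ : ∀ i : Fin n, IsPrimitiveRoot (ζ i) (d i.succ + 1)) :
    (Ideal.span (Set.range fun i : Fin n =>
        (X i.succ : MvPolynomial (Fin (n + 1)) ℂ) ^ (d i.succ + 1)
          - X 0 ^ (d i.succ + 1))).IsRadical ∧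
    (∀ v : Fin (n + 1) → ℂ, v ≠ 0 →
      ((∀ p ∈ Ideal.span (Set.range fun i : Fin n =>
          (X i.succ : MvPolynomial (Fin (n + 1)) ℂ) ^ (d i.succ + 1)
            - X 0 ^ (d i.succ + 1)), eval v p = 0)
        ↔ ∃ (c : ℂ) (a : (i : Fin n) → Fin (d i.succ + 1)), c ≠ 0 ∧
            v = c • (Fin.cons 1 (fun i : Fin n => ζ i ^ (a i : ℕ)) : Fin (n + 1) → ℂ))) ∧
    Function.Injective
      (fun a : (i : Fin n) → Fin (d i.succ + 1) =>
        (Fin.cons 1 (fun i : Fin n => ζ i ^ (a i : ℕ)) : Fin (n + 1) → ℂ)) ∧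
    Fintype.card ((i : Fin n) → Fin (d i.succ + 1))
      = ∏ i ∈ Finset.univ.erase 0, (d i + 1) := by
  refine ⟨isRadical_span_pow_sub_pow (fun i => d i.succ + 1) (fun i => Nat.succ_pos _) ζ hζ,
    fun v hv => ⟨fun h => ?_, ?_⟩, ?_, ?_⟩
  · have hi : ∀ i : Fin n, v i.succ ^ (d i.succ + 1) = v 0 ^ (d i.succ + 1) := fun i => by
      have := h _ (Ideal.subset_span ⟨i, rfl⟩)
      simpa [sub_eq_zero] using this
    have h0 : v 0 ≠ 0 := fun h0 => hv (by
      funext j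
      refine Fin.cases h0 (fun i => ?_) j
      have := hi i
      rw [h0, zero_pow (Nat.succ_ne_zero _)] at this
      exact eq_zero_of_pow_eq_zero this)
    have hj : ∀ i : Fin n, ∃ j : Fin (d i.succ + 1), ζ i ^ (j : ℕ) = v i.succ / v 0 := fun i => by
      obtain ⟨j, hj, hj'⟩ := (hζ i).eq_pow_of_pow_eq_one (ξ := v i.succ / v 0)
        (by rw [div_pow, hi i, div_self (pow_ne_zero _ h0)])
      exact ⟨⟨j, hj⟩, hj'⟩
    choose a ha using hj
    refine ⟨v 0, a, h0, ?_⟩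
    funext j
    refine Fin.cases (by simp) (fun i => ?_) j
    simp only [Pi.smul_apply, Fin.cons_succ, ha, smul_eq_mul]
    rw [mul_div_cancel₀ _ h0]
  · rintro ⟨c, a, -, rfl⟩ p hp
    have hle : Ideal.span (Set.range fun i : Fin n =>
        (X i.succ : MvPolynomial (Fin (n + 1)) ℂ) ^ (d i.succ + 1)
          - X 0 ^ (d i.succ + 1)) ≤ RingHom.ker (eval
        (c • (Fin.cons 1 (fun i : Fin n => ζ i ^ (a i : ℕ)) : Fin (n + 1) → ℂ))) := by
      rw [Ideal.span_le]
      rintro _ ⟨i, rfl⟩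
      have h1 : (ζ i ^ (a i : ℕ)) ^ (d i.succ + 1) = 1 := by
        rw [← pow_mul, mul_comm, pow_mul, (hζ i).pow_eq_one, one_pow]
      simp [RingHom.mem_ker, mul_pow, h1]
    exact hle hp
  · intro a b hab
    funext i
    have := congrFun hab i.succ
    simp only [Fin.cons_succ] at this
    exact Fin.ext ((hζ i).pow_inj (a i).2 (b i).2 this)
  · -- Cancel the factor `d 0 + 1` from both ways of splitting it off `∏ i, (d i + 1)`.
    have h := Fin.prod_univ_succ fun i => d i + 1
    rw [← Finset.mul_prod_erase _ _ (Finset.mem_univ (0 : Fin (n + 1)))] at h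
    rw [Nat.eq_of_mul_eq_mul_left (Nat.succ_pos _) h]
    simp
end

section
/- Let n ≥ 1, k ≥ 1, F = (x_0 x_1 ⋯ x_n)^k ∈ ℂ[x_0,…,x_n], d = (n+1)k, and suppose F = ℓ_1^d + ⋯ + ℓ_r^d and F = m_1^d + ⋯ + m_r^d are two Waring decompositions (r = R(F) = (k+1)^n). Then there exist λ_0,…,λ_n ∈ ℂ* with λ_0^k λ_1^k ⋯ λ_n^k = 1 such that the scaling automorphism x_i ↦ λ_i x_i maps the set of points {[ℓ_1],…,[ℓ_r]} ⊂ ℙ^n onto {[m_1],…,[m_r]}; i.e., the torus of weight-preserving scalings acts transitively on the set of Waring decompositions of F. -/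
open MvPolynomial

/-!
For a decomposition `F = ∑ ℓ_j ^ d` of `F = (x_0 ⋯ x_n)^k`, comparing coefficients gives the moment
identities `∑ j, ∏ i, ℓ_{ji} ^ a_i = 0` for every exponent `a` of degree `d = (n+1)k` other than
`(k, …, k)`, and a nonzero value for `a = (k, …, k)` (this is apolarity of the ideal of the points to
`F`, lemma `exists_moments`). In the affine coordinates `z_{ji} = ℓ_{j,i+1} / ℓ_{j0}`, these say that
`∑ j, ℓ_{j0}^d z_j ^ b` vanishes unless `b = (k, …, k)`, first for `|b| < d` (the points with
`ℓ_{j0} = 0` drop out), and for `|b| ≤ d` once all `ℓ_{j0}` are known to be nonzero.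

Pairing a combination of the monomials `z ^ a`, `0 ≤ a_i ≤ k`, with the complementary monomials
`z ^ (k - a)`, starting from the top degree, isolates its coefficients one after the other
(`coeff_eq_zero_of_moments`). This has two consequences.

* The `(k+1)^n` monomials `z ^ a` are linearly independent on the points. As there are only
  `(k+1)^n` points, these monomials form a basis of all functions on the index set; hence every
  `ℓ_{j0}` is nonzero and the points `z_j` are pairwise distinct.
* Expanding `z_i ^ (k+1)` in this basis, all coefficients of positive degree vanish, because the
  pairings involve an exponent exceeding `k`; so `z_i ^ (k+1)` is a constant `c_i`, and `c_i ≠ 0`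
  because the moment of `(k, …, k)` is nonzero.

By counting, the points are exactly the solutions of `z_i ^ (k+1) = c_i` (`waring_structure`,
`exists_eq_of_pow_eq`). A diagonal scaling carries the system with constants `c` to the one with any
other nonzero constants `c'`, and a common factor normalises `∏ Λ_i ^ k` to `1`.
-/

/-- The power sums of a Waring decomposition of `(x_0 ⋯ x_{N-1})^k` vanish in degree `N * k` except
for the exponent `(k, …, k)`. -/
lemma exists_moments {N k r : ℕ} (u : Fin r → Fin N → ℂ)
    (h : (∏ i, X i ^ k : MvPolynomial (Fin N) ℂ)
        = ∑ j, (∑ i, C (u j i) * X i) ^ (N * k)) :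
    ∃ M : ℂ, M ≠ 0 ∧ ∀ a : Fin N → ℕ, ∑ i, a i = N * k →
      ∑ j, ∏ i, u j i ^ a i = if a = fun _ => k then M else 0 := by
  set s0 : Fin N →₀ ℕ := Finsupp.equivFunOnFinite.symm (fun _ => k) with hs0
  have hpos : ∀ s : Fin N →₀ ℕ, (s.multinomial : ℂ) ≠ 0 := fun s => by
    rw [Finsupp.multinomial_eq]
    exact_mod_cast (Nat.multinomial_pos _ _).ne'
  refine ⟨(s0.multinomial : ℂ)⁻¹, inv_ne_zero (hpos _), fun a ha => ?_⟩
  have h1 := congrArg (coeff (Finsupp.equivFunOnFinite.symm a)) h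
  have hsum : (Finsupp.equivFunOnFinite.symm a).sum (fun _ m => m) = N * k := by
    rw [Finsupp.sum_fintype _ _ (fun _ => rfl)]; simpa using ha
  have hprod : ∀ j, (Finsupp.equivFunOnFinite.symm a).prod (fun i m => u j i ^ m)
      = ∏ i, u j i ^ a i := fun j => by
    rw [Finsupp.prod_fintype _ _ (fun _ => pow_zero _)]; simp
  simp only [← smul_eq_C_mul, coeff_sum, coeff_linearCombination_X_pow_of_fintype, hsum, if_true,
    hprod, ← Finset.mul_sum] at h1
  have h2 : coeff (Finsupp.equivFunOnFinite.symm a) (∏ i, X i ^ k : MvPolynomial (Fin N) ℂ)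
      = if a = fun _ => k then 1 else 0 := by
    have : (∏ i, X i ^ k : MvPolynomial (Fin N) ℂ) = monomial s0 1 := by
      rw [monomial_eq, Finsupp.prod_fintype _ _ (fun _ => pow_zero _)]
      simp [hs0]
    rw [this, coeff_monomial]
    congr 1
    rw [hs0, Equiv.apply_eq_iff_eq]
    exact propext eq_comm
  rw [h2] at h1
  have h3 := hpos (Finsupp.equivFunOnFinite.symm a)
  split_ifs at h1 ⊢ with hc
  · rw [hs0, ← hc]
    exact eq_inv_of_mul_eq_one_right h1.symm
  · exact (mul_eq_zero.mp h1.symm).resolve_left h3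

/-- Triangularity of the pairing between `z ^ a` and `z ^ (k - a)` for `a` in the box `[0, k]^n`.
If a function `p` on the points is the combination `∑ g_a z ^ a`, and `p` pairs to zero with
`z ^ (k - a)` whenever `|a| ≥ e`, then `g_a = 0` whenever `|a| ≥ e`. -/
lemma coeff_eq_zero_of_moments {n k r : ℕ} (w : Fin r → ℂ) (z : Fin r → Fin n → ℂ) {M : ℂ}
    (hM : M ≠ 0)
    (hL : ∀ b : Fin n → ℕ, ∑ i, b i ≤ n * k →
      ∑ j, w j * ∏ i, z j i ^ b i = if b = fun _ => k then M else 0)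
    (g : (Fin n → Fin (k + 1)) → ℂ) (p : Fin r → ℂ)
    (hp : ∀ j, w j ≠ 0 → ∑ a, g a * ∏ i, z j i ^ (a i : ℕ) = p j) (e : ℕ)
    (hpair : ∀ a : Fin n → Fin (k + 1), e ≤ ∑ i, (a i : ℕ) →
      ∑ j, w j * (p j * ∏ i, z j i ^ (k - (a i : ℕ))) = 0) :
    ∀ a : Fin n → Fin (k + 1), e ≤ ∑ i, (a i : ℕ) → g a = 0 := by
  have hle : ∀ (a : Fin n → Fin (k + 1)) i, (a i : ℕ) ≤ k := fun a i => Nat.lt_succ_iff.mp (a i).2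
  have hdeg : ∀ a : Fin n → Fin (k + 1), ∑ i, (a i : ℕ) ≤ n * k := fun a => by
    simpa using Finset.sum_le_sum (fun i (_ : i ∈ Finset.univ) => hle a i)
  suffices H : ∀ t : ℕ, ∀ a : Fin n → Fin (k + 1), n * k - ∑ i, (a i : ℕ) = t →
      e ≤ ∑ i, (a i : ℕ) → g a = 0 from fun a => H _ a rfl
  intro t
  induction t using Nat.strong_induction_on with
  | _ t ih =>
    intro a hat hea
    have key : ∑ j, w j * (p j * ∏ i, z j i ^ (k - (a i : ℕ)))
        = ∑ a', g a' * ∑ j, w j * ∏ i, z j i ^ ((a' i : ℕ) + (k - (a i : ℕ))) := by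
      simp only [Finset.mul_sum]
      rw [Finset.sum_comm]
      refine Finset.sum_congr rfl fun j _ => ?_
      by_cases hw : w j = 0
      · simp [hw]
      · rw [← hp j hw, Finset.sum_mul, Finset.mul_sum]
        refine Finset.sum_congr rfl fun a' _ => ?_
        simp only [pow_add, Finset.prod_mul_distrib]
        ring
    rw [hpair a hea, Finset.sum_eq_single a] at key
    · have hk : (fun i => (a i : ℕ) + (k - (a i : ℕ))) = fun _ => k :=
        funext fun i => Nat.add_sub_cancel' (hle a i)
      rw [hL _ (by simp [congrFun hk]), if_pos hk] at key
      exact (mul_eq_zero.mp key.symm).resolve_right hM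
    · intro a' _ hne
      rcases lt_or_ge (∑ i, (a i : ℕ)) (∑ i, (a' i : ℕ)) with hlt | hge
      · have := hdeg a'
        rw [ih _ (by omega) a' rfl (by omega), zero_mul]
      · have h1 : ∑ i, (k - (a i : ℕ)) + ∑ i, (a i : ℕ) = n * k := by
          rw [← Finset.sum_add_distrib]
          simp [fun i => Nat.sub_add_cancel (hle a i)]
        rw [hL _ (by rw [Finset.sum_add_distrib]; omega), if_neg, mul_zero]
        intro h
        refine hne (funext fun i => Fin.ext ?_)
        have h2 : (a' i : ℕ) + (k - (a i : ℕ)) = k := congrFun h i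
        have := hle a i
        omega
    · simp

/-- The points of a Waring decomposition of length `(k+1)^n` of `(x_0 ⋯ x_n)^k` are distinct points
of the affine chart `x_0 ≠ 0`, and their affine coordinates have constant nonzero `(k+1)`-st
powers. -/
lemma waring_structure {n k r : ℕ} (hk : 1 ≤ k) (hr : r = (k + 1) ^ n)
    (u : Fin r → Fin (n + 1) → ℂ)
    (h : (∏ i, X i ^ k : MvPolynomial (Fin (n + 1)) ℂ)
        = ∑ j, (∑ i, C (u j i) * X i) ^ ((n + 1) * k)) :
    (∀ j, u j 0 ≠ 0) ∧
    (Function.Injective fun (j : Fin r) (i : Fin n) => u j i.succ / u j 0) ∧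
    ∃ c : Fin n → ℂ, (∀ i, c i ≠ 0) ∧ ∀ j i, (u j i.succ / u j 0) ^ (k + 1) = c i := by
  obtain ⟨M, hM, hmom⟩ := exists_moments u h
  have hd : (n + 1) * k = n * k + k := by ring
  set z : Fin r → Fin n → ℂ := fun j i => u j i.succ / u j 0 with hz
  set w : Fin r → ℂ := fun j => u j 0 ^ ((n + 1) * k) with hw
  have hw0 : ∀ j, u j 0 = 0 → w j = 0 := fun j hj => by
    simp only [hw, hj]; exact zero_pow (by omega)
  have hL : ∀ b : Fin n → ℕ, ∑ i, b i ≤ (n + 1) * k →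
      ((∀ j, u j 0 ≠ 0) ∨ ∑ i, b i < (n + 1) * k) →
      ∑ j, w j * ∏ i, z j i ^ b i = if b = fun _ => k then M else 0 := by
    intro b hb hor
    set a : Fin (n + 1) → ℕ := Fin.cons ((n + 1) * k - ∑ i, b i) b with ha
    have h1 := hmom a (by rw [Fin.sum_univ_succ]; simp [ha]; omega)
    have h2 : a = (fun _ => k) ↔ b = fun _ => k := by
      constructor
      · intro h; funext i; simpa [ha] using congrFun h i.succ
      · intro h; funext i
        refine Fin.cases ?_ (fun i => ?_) i
        · simp [ha, h, hd]
        · simp [ha, h]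
    simp only [h2] at h1
    rw [← h1]
    refine Finset.sum_congr rfl fun j _ => ?_
    rw [Fin.prod_univ_succ]
    simp only [ha, Fin.cons_zero, Fin.cons_succ]
    by_cases hj : u j 0 = 0
    · have hlt : ∑ i, b i < (n + 1) * k := hor.resolve_left fun H => H j hj
      rw [hw0 j hj, hj, zero_pow (by omega)]
      simp
    · simp only [hz, hw, div_pow, Finset.prod_div_distrib, Finset.prod_pow_eq_pow_sum]
      rw [pow_sub₀ _ hj hb]
      field_simp
  have hL' : ∀ b : Fin n → ℕ, ∑ i, b i ≤ n * k →
      ∑ j, w j * ∏ i, z j i ^ b i = if b = fun _ => k then M else 0 :=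
    fun b hb => hL b (by omega) (Or.inr (by omega))
  -- The factor `u j 0` makes these functions vanish at the points outside the chart.
  set f : (Fin n → Fin (k + 1)) → (Fin r → ℂ) :=
    fun a j => u j 0 * ∏ i, z j i ^ (a i : ℕ) with hf
  have hli : LinearIndependent ℂ f := by
    rw [Fintype.linearIndependent_iff]
    intro g hg a
    refine coeff_eq_zero_of_moments w z hM hL' g 0 (fun j hj => ?_) 0 (fun a _ => by simp) a
      (Nat.zero_le _)
    have hu : u j 0 ≠ 0 := fun H => hj (hw0 j H)
    have h1 := congrFun hg j
    simp only [hf, Finset.sum_apply, Pi.smul_apply, smul_eq_mul, Pi.zero_apply] at h1 ⊢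
    refine (mul_eq_zero.mp ?_).resolve_left hu
    rw [← h1, Finset.mul_sum]
    exact Finset.sum_congr rfl fun a _ => by ring
  have hspan : ⊤ ≤ Submodule.span ℂ (Set.range f) :=
    (hli.span_eq_top_of_card_eq_finrank' (by simp [hr])).ge
  have hexp : ∀ q : Fin r → ℂ, ∃ g : (Fin n → Fin (k + 1)) → ℂ, ∀ j,
      u j 0 * ∑ a, g a * ∏ i, z j i ^ (a i : ℕ) = q j := by
    intro q
    obtain ⟨g, hg⟩ := (Submodule.mem_span_range_iff_exists_fun ℂ).mp
      (hspan (Submodule.mem_top : q ∈ _))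
    refine ⟨g, fun j => ?_⟩
    rw [← hg]
    simp only [hf, Finset.sum_apply, Pi.smul_apply, smul_eq_mul, Finset.mul_sum]
    exact Finset.sum_congr rfl fun a _ => by ring
  have hne : ∀ j, u j 0 ≠ 0 := by
    intro j hj
    obtain ⟨g, hg⟩ := hexp 1
    simpa [hj] using hg j
  have hinj : Function.Injective z := by
    intro j j' hjj
    by_contra hcon
    obtain ⟨g, hg⟩ := hexp (Pi.single j 1)
    have h1 := hg j
    have h2 := hg j'
    rw [Pi.single_eq_of_ne (Ne.symm hcon), ← hjj] at h2
    rw [(mul_eq_zero.mp h2).resolve_left (hne j'), Pi.single_eq_same, mul_zero] at h1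
    exact zero_ne_one h1
  have hconst : ∀ i, ∃ c : ℂ, ∀ j, z j i ^ (k + 1) = c := by
    intro i
    obtain ⟨g, hg⟩ := hexp (fun j => u j 0 * z j i ^ (k + 1))
    have hg' : ∀ j, ∑ a, g a * ∏ i, z j i ^ (a i : ℕ) = z j i ^ (k + 1) :=
      fun j => mul_left_cancel₀ (hne j) (hg j)
    have hg0 := coeff_eq_zero_of_moments w z hM hL' g _ (fun j _ => hg' j) 1 (by
      intro a ha
      have hle : ∀ i, (a i : ℕ) ≤ k := fun i => Nat.lt_succ_iff.mp (a i).2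
      have h1 : ∑ i, (k - (a i : ℕ)) + ∑ i, (a i : ℕ) = n * k := by
        rw [← Finset.sum_add_distrib]
        simp [fun i => Nat.sub_add_cancel (hle i)]
      have h2 : ∑ l, ((k - (a l : ℕ)) + if l = i then k + 1 else 0) ≤ (n + 1) * k := by
        rw [Finset.sum_add_distrib]
        simp only [Finset.sum_ite_eq', Finset.mem_univ, if_true]
        omega
      have h3 := hL _ h2 (Or.inl hne)
      rw [if_neg] at h3
      · rw [← h3]
        refine Finset.sum_congr rfl fun j _ => ?_
        simp only [pow_add, Finset.prod_mul_distrib, pow_ite, pow_zero, Finset.prod_ite_eq',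
          Finset.mem_univ, if_true]
        ring
      · intro H
        have := congrFun H i
        simp only [if_true] at this
        omega)
    refine ⟨g 0, fun j => ?_⟩
    rw [← hg' j, Finset.sum_eq_single 0]
    · simp
    · intro a _ ha
      rw [hg0 a ?_, zero_mul]
      by_contra hlt
      refine ha (funext fun i => Fin.ext ?_)
      have : ∑ i, (a i : ℕ) = 0 := by omega
      simpa using (Finset.sum_eq_zero_iff.mp this) i (Finset.mem_univ i)
    · simp
  choose c hc using hconst
  refine ⟨hne, hinj, c, fun i hci => hM ?_, fun j i => hc i j⟩
  have hzi : ∀ j, z j i = 0 := fun j => by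
    have := hc i j
    rw [hci] at this
    exact pow_eq_zero_iff (by omega) |>.mp this
  have h1 := hL' (fun _ => k) (by simp)
  rw [if_pos rfl] at h1
  rw [← h1]
  refine Finset.sum_eq_zero fun j _ => ?_
  rw [Finset.prod_eq_zero (Finset.mem_univ i) (by rw [hzi j, zero_pow (by omega)]), mul_zero]

/-- The system `y_i ^ (k+1) = c_i` has at most `(k+1)^n` solutions, so `(k+1)^n` distinct ones
exhaust them. -/
lemma exists_eq_of_pow_eq {n k r : ℕ} (hr : r = (k + 1) ^ n) (c : Fin n → ℂ)
    (z : Fin r → Fin n → ℂ) (hinj : Function.Injective z)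
    (hz : ∀ j i, z j i ^ (k + 1) = c i) (y : Fin n → ℂ) (hy : ∀ i, y i ^ (k + 1) = c i) :
    ∃ j, z j = y := by
  classical
  set T : Finset (Fin n → ℂ) :=
    Fintype.piFinset fun i => (Polynomial.nthRoots (k + 1) (c i)).toFinset with hT
  have hmem : ∀ x : Fin n → ℂ, x ∈ T ↔ ∀ i, x i ^ (k + 1) = c i := fun x => by
    simp [hT, Fintype.mem_piFinset, Polynomial.mem_nthRoots]
  have hcard : T.card ≤ r := by
    rw [hT, Fintype.card_piFinset, hr]
    calc _ ≤ ∏ _i : Fin n, (k + 1) := Finset.prod_le_prod' fun i _ =>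
          (Multiset.toFinset_card_le _).trans (Polynomial.card_nthRoots _ _)
      _ = _ := by simp
  have hs := Finset.surjOn_of_injOn_of_card_le (s := Finset.univ) (t := T) z
    (fun j _ => (hmem _).2 (hz j)) hinj.injOn (by simpa using hcard)
  obtain ⟨j, -, hj⟩ := hs ((hmem y).2 hy)
  exact ⟨j, hj⟩

theorem torus_acts_transitively (n k : ℕ) (hn : 1 ≤ n) (hk : 1 ≤ k)
    (r : ℕ) (hr : r = (k + 1) ^ n)
    (ℓ m : Fin r → (Fin (n + 1) → ℂ))
    (hℓ : (∏ i, X i ^ k : MvPolynomial (Fin (n + 1)) ℂ)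
        = ∑ j, (∑ i, C (ℓ j i) * X i) ^ ((n + 1) * k))
    (hm : (∏ i, X i ^ k : MvPolynomial (Fin (n + 1)) ℂ)
        = ∑ j, (∑ i, C (m j i) * X i) ^ ((n + 1) * k))
    (hmin : IsLeast {s : ℕ | ∃ u : Fin s → (Fin (n + 1) → ℂ),
        (∏ i, X i ^ k : MvPolynomial (Fin (n + 1)) ℂ)
          = ∑ j, (∑ i, C (u j i) * X i) ^ ((n + 1) * k)} r) :
    ∃ Λ : Fin (n + 1) → ℂ, (∀ i, Λ i ≠ 0) ∧ (∏ i, Λ i ^ k) = 1 ∧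
      (∀ j : Fin r, ∃ (j' : Fin r) (c : ℂ), c ≠ 0 ∧
        (fun i => Λ i * ℓ j i) = c • m j') ∧
      (∀ j' : Fin r, ∃ (j : Fin r) (c : ℂ), c ≠ 0 ∧
        (fun i => Λ i * ℓ j i) = c • m j') := by
  obtain ⟨hℓ0, hℓinj, c, hc0, hc⟩ := waring_structure hk hr ℓ hℓ
  obtain ⟨hm0, hminj, c', hc0', hc'⟩ := waring_structure hk hr m hm
  have hroot : ∀ i, ∃ μ : ℂ, μ ^ (k + 1) = c' i / c i := fun i =>
    IsAlgClosed.exists_pow_nat_eq _ (Nat.succ_pos k)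
  choose μ hμ using hroot
  have hμ0 : ∀ i, μ i ≠ 0 := fun i h => by
    have := hμ i
    rw [h, zero_pow (by omega)] at this
    exact div_ne_zero (hc0' i) (hc0 i) this.symm
  have hP : (∏ i, μ i ^ k) ≠ 0 := Finset.prod_ne_zero_iff.mpr fun i _ => pow_ne_zero _ (hμ0 i)
  have hd : 0 < (n + 1) * k := Nat.mul_pos n.succ_pos hk
  obtain ⟨t, ht⟩ := IsAlgClosed.exists_pow_nat_eq ((∏ i, μ i ^ k)⁻¹) hd
  have ht0 : t ≠ 0 := fun h => by
    rw [h, zero_pow hd.ne'] at ht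
    exact inv_ne_zero hP ht.symm
  -- Equality of the affine points gives equality of the projective points.
  have hproj : ∀ j j', (∀ i, μ i * (ℓ j i.succ / ℓ j 0) = m j' i.succ / m j' 0) →
      ∃ a : ℂ, a ≠ 0 ∧
        (fun i => (Fin.cons t fun i => t * μ i : Fin (n + 1) → ℂ) i * ℓ j i) = a • m j' := by
    intro j j' H
    refine ⟨t * ℓ j 0 / m j' 0, div_ne_zero (mul_ne_zero ht0 (hℓ0 j)) (hm0 j'), ?_⟩
    have h1 := hℓ0 j
    have h2 := hm0 j'
    funext i
    refine Fin.cases ?_ (fun i => ?_) i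
    · simp only [Fin.cons_zero, Pi.smul_apply, smul_eq_mul]
      field_simp
    · have h3 := H i
      simp only [Fin.cons_succ, Pi.smul_apply, smul_eq_mul]
      field_simp at h3 ⊢
      linear_combination h3
  have hpow : ∀ j i, (μ i * (ℓ j i.succ / ℓ j 0)) ^ (k + 1) = c' i := fun j i => by
    rw [mul_pow, hc, hμ, div_mul_cancel₀ _ (hc0 i)]
  refine ⟨Fin.cons t fun i => t * μ i, ?_, ?_, fun j => ?_, fun j' => ?_⟩
  · intro i
    refine Fin.cases ?_ (fun i => ?_) i
    · simpa using ht0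
    · simpa using ⟨ht0, hμ0 i⟩
  · rw [Fin.prod_univ_succ]
    simp only [Fin.cons_zero, Fin.cons_succ, mul_pow, Finset.prod_mul_distrib, Finset.prod_const,
      Finset.card_univ, Fintype.card_fin]
    rw [← mul_assoc, ← pow_mul, ← pow_add, show k + k * n = (n + 1) * k by ring, ht,
      inv_mul_cancel₀ hP]
  · obtain ⟨j', hj'⟩ := exists_eq_of_pow_eq hr c' _ hminj hc' _ (hpow j)
    exact ⟨j', hproj j j' fun i => (congrFun hj' i).symm⟩
  · obtain ⟨j, hj⟩ := exists_eq_of_pow_eq hr c'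
      (fun j i => μ i * (ℓ j i.succ / ℓ j 0))
      (fun j₁ j₂ h => hℓinj (funext fun i => mul_left_cancel₀ (hμ0 i) (congrFun h i)))
      hpow _ (hc' j')
    exact ⟨j, hproj j j' fun i => congrFun hj i⟩
end

section
/- Let F = x_0^{d_0} x_1^{d_1} ⋯ x_n^{d_n} with 0 < d_0 ≤ d_1 ≤ ⋯ ≤ d_n and d_0 < d_n, d = Σ d_i, r = R(F) = (d_1+1)⋯(d_n+1). Then there exist two Waring decompositions F = ℓ_1^d + ⋯ + ℓ_r^d and F = m_1^d + ⋯ + m_r^d such that NO tuple (λ_0,…,λ_n) ∈ (ℂ*)^{n+1} with λ_0^{d_0} λ_1^{d_1} ⋯ λ_n^{d_n} = 1 maps the point set {[ℓ_1],…,[ℓ_r]} ⊂ ℙ^n onto {[m_1],…,[m_r]} via x_i ↦ λ_i x_i; i.e., the torus action on Waring decompositions of F is not transitive. -/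
open MvPolynomial

/-!
Comparing coefficients through the multinomial theorem (`decomp_iff`), a family of linear forms
`u_j` decomposes `x^d` exactly when its power sums `∑ j, u_j^k` over exponents `k` of total degree
`∑ d i` vanish for `k ≠ d` and equal the inverse multinomial coefficient for `k = d`.

*Lower bound* (`card_le_of_decomp`). With fewer than `N = ∏_{i ≥ 1} (d_i + 1)` forms, linear
algebra yields a nonzero polynomial `q` in the span of the `N` monomials `y^e`, `e_i ≤ d_i`, that
vanishes at the dehomogenized points `u_{j,i} / u_{j,0}`. Let `y^{e'}` be a monomial of top degree
in `q`, and let `Q` be the homogenization of `q`. The form `x_0^{d_0} (∏_{i ≥ 1} x_i^{d_i - e'_i}) Q`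
has degree `∑ d i`, and vanishes at every `u_j`, including those on `x_0 = 0` because `d_0 > 0`.
Its coefficient at `x^d` is `q_{e'} ≠ 0`, which contradicts the power sum identities.

*Decompositions* (`exists_decomp`). For each `i ≥ 1` take `d_i + 1` weighted points of `ℂ` whose
moments of order `k ≤ d_i + d_0` are `1` for `k = d_i` and `0` otherwise. The product of these
configurations, placed in the chart `x_0 = 1`, gives a decomposition with `N` summands. One such
configuration consists of the `(d_i+1)`-st roots of unity (`exists_moments`); when `d_0 < d_i`,
another consists of `0` together with the `d_i`-th roots of unity (`exists_moments_zero`).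

*Non-equivalence*. If roots of unity are used everywhere, no point lies on `x_n = 0`. If the
second configuration is used for `i = n`, some point does. A torus element preserves the
hyperplane `x_n = 0`, so it cannot map the first point set onto the second.
-/

theorem pow_linear_form {n : ℕ} (v : Fin n → ℂ) (D : ℕ) :
    (∑ i, C (v i) * X i : MvPolynomial (Fin n) ℂ) ^ D
      = ∑ k ∈ Finset.piAntidiag Finset.univ D, monomial (Finsupp.equivFunOnFinite.symm k)
          ((Nat.multinomial Finset.univ k : ℂ) * ∏ i, v i ^ k i) := by
  rw [Finset.sum_pow_eq_sum_piAntidiag]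
  refine Finset.sum_congr rfl fun k _ => ?_
  have h : (monomial (Finsupp.equivFunOnFinite.symm k)
      ((Nat.multinomial Finset.univ k : ℂ) * ∏ i, v i ^ k i) : MvPolynomial (Fin n) ℂ)
      = C ((Nat.multinomial Finset.univ k : ℂ) * ∏ i, v i ^ k i) * ∏ i, X i ^ k i := by
    rw [monomial_eq, Finsupp.prod_fintype _ _ (by simp)]
    simp
  rw [h]
  simp only [mul_pow, Finset.prod_mul_distrib, map_mul, map_prod, map_pow, map_natCast, mul_assoc]

theorem coeff_pow_linear_form {n : ℕ} (v : Fin n → ℂ) (D : ℕ) (k : Fin n → ℕ) :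
    coeff (Finsupp.equivFunOnFinite.symm k) ((∑ i, C (v i) * X i : MvPolynomial (Fin n) ℂ) ^ D)
      = if ∑ i, k i = D then (Nat.multinomial Finset.univ k : ℂ) * ∏ i, v i ^ k i else 0 := by
  rw [pow_linear_form, coeff_sum]
  simp [coeff_monomial, Finset.sum_ite_eq', Finset.mem_piAntidiag]

/-- Coefficientwise form of a decomposition of the monomial `x^d` as a sum of powers. -/
theorem decomp_iff {n s : ℕ} (d : Fin n → ℕ) (u : Fin s → Fin n → ℂ) :
    ((∏ i, X i ^ d i : MvPolynomial (Fin n) ℂ) = ∑ j, (∑ i, C (u j i) * X i) ^ (∑ i, d i)) ↔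
      ∀ k : Fin n → ℕ, ∑ i, k i = ∑ i, d i →
        (Nat.multinomial Finset.univ k : ℂ) * ∑ j, ∏ i, u j i ^ k i = if k = d then 1 else 0 := by
  have hmon : (∏ i, X i ^ d i : MvPolynomial (Fin n) ℂ)
      = monomial (Finsupp.equivFunOnFinite.symm d) 1 := by
    rw [monomial_eq, Finsupp.prod_fintype _ _ (by simp)]
    simp
  have hc : ∀ k : Fin n → ℕ, coeff (Finsupp.equivFunOnFinite.symm k)
      (∏ i, X i ^ d i : MvPolynomial (Fin n) ℂ) = if k = d then 1 else 0 := by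
    intro k
    rw [hmon, coeff_monomial]
    simp [eq_comm]
  constructor
  · intro h k hk
    rw [← hc k, h, coeff_sum]
    simp [coeff_pow_linear_form, hk, Finset.mul_sum]
  · intro h
    ext k'
    obtain ⟨k, rfl⟩ := Finsupp.equivFunOnFinite.symm.surjective k'
    rw [hc, coeff_sum]
    simp only [coeff_pow_linear_form]
    by_cases hk : ∑ i, k i = ∑ i, d i
    · simp [hk, ← h k hk, Finset.mul_sum]
    · rw [if_neg (by rintro rfl; exact hk rfl)]
      simp [hk]

theorem multinomial_ne_zero {n : ℕ} (k : Fin n → ℕ) :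
    (Nat.multinomial Finset.univ k : ℂ) ≠ 0 :=
  Nat.cast_ne_zero.mpr (ne_of_gt (Nat.multinomial_pos _ _))

/-- The lower bound for the Waring rank of a monomial. -/
theorem card_le_of_decomp {n s : ℕ} (d : Fin (n + 1) → ℕ) (hpos : 0 < d 0)
    (u : Fin s → Fin (n + 1) → ℂ)
    (h : (∏ i, X i ^ d i : MvPolynomial (Fin (n + 1)) ℂ)
      = ∑ j, (∑ i, C (u j i) * X i) ^ (∑ i, d i)) :
    ∏ i : Fin n, (d i.succ + 1) ≤ s := by
  rw [decomp_iff] at h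
  by_contra! hlt
  -- `q` vanishes at the points `u j i.succ / u j 0`; where `u j 0 = 0` the quotient is `0`, and
  -- the resulting extra linear condition is harmless.
  obtain ⟨q, hq0, hq⟩ : ∃ q : ((i : Fin n) → Fin (d i.succ + 1)) → ℂ, q ≠ 0 ∧
      ∀ j, ∑ e, q e * ∏ i, (u j i.succ / u j 0) ^ (e i : ℕ) = 0 := by
    let A : (((i : Fin n) → Fin (d i.succ + 1)) → ℂ) →ₗ[ℂ] (Fin s → ℂ) :=
      Matrix.mulVecLin (Matrix.of fun j e => ∏ i, (u j i.succ / u j 0) ^ (e i : ℕ))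
    have hA : LinearMap.ker A ≠ ⊥ := by
      apply LinearMap.ker_ne_bot_of_finrank_lt
      simpa using hlt
    obtain ⟨q, hq, hq0⟩ := Submodule.exists_mem_ne_zero_of_ne_bot hA
    refine ⟨q, hq0, fun j => ?_⟩
    have := congrFun (LinearMap.mem_ker.mp hq) j
    simpa [A, Matrix.mulVec, dotProduct, mul_comm] using this
  obtain ⟨e', he', hmax⟩ : ∃ e', q e' ≠ 0 ∧
      ∀ e, q e ≠ 0 → ∑ i, (e i : ℕ) ≤ ∑ i, (e' i : ℕ) := by
    obtain ⟨e₀, he₀⟩ := Function.ne_iff.mp hq0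
    obtain ⟨e', he', hm⟩ := Finset.exists_max_image (Finset.univ.filter fun e => q e ≠ 0)
      (fun e => ∑ i, (e i : ℕ)) ⟨e₀, by simpa using he₀⟩
    exact ⟨e', by simpa using he', fun e he => hm e (by simpa using he)⟩
  -- `f e` is the exponent of the monomial that `y^e` contributes to the form of degree `∑ d i`.
  let f : ((i : Fin n) → Fin (d i.succ + 1)) → Fin (n + 1) → ℕ := fun e =>
    Fin.cons (d 0 + (∑ i, (e' i : ℕ) - ∑ i, (e i : ℕ))) fun i => d i.succ - e' i + e i
  have hfdeg : ∀ e, q e ≠ 0 → ∑ i, f e i = ∑ i, d i := by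
    intro e he
    have h1 := hmax e he
    have h2 : ∑ i : Fin n, (d i.succ - (e' i : ℕ)) + ∑ i, (e' i : ℕ) = ∑ i : Fin n, d i.succ := by
      rw [← Finset.sum_add_distrib]
      exact Finset.sum_congr rfl fun i _ => by have := (e' i).2; omega
    simp only [f, Fin.sum_univ_succ, Fin.cons_zero, Fin.cons_succ, Finset.sum_add_distrib]
    omega
  have hfd : ∀ e, f e = d → e = e' := by
    intro e he
    funext i
    have h1 := congrFun he i.succ
    simp only [f, Fin.cons_succ] at h1
    have := (e' i).2
    exact Fin.ext (by omega)
  have hfe' : f e' = d := by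
    funext i
    refine Fin.cases ?_ (fun i => ?_) i
    · simp [f]
    · have := (e' i).2
      simp only [f, Fin.cons_succ]
      omega
  have hvan : ∀ j, ∑ e, q e * ∏ i, u j i ^ f e i = 0 := by
    intro j
    by_cases hj : u j 0 = 0
    · refine Finset.sum_eq_zero fun e _ => ?_
      rw [Fin.prod_univ_succ]
      simp only [f, Fin.cons_zero, hj]
      rw [zero_pow (by omega)]
      simp
    · have : ∀ e, q e * ∏ i, u j i ^ f e i
          = (u j 0 ^ (d 0 + ∑ i, (e' i : ℕ)) * ∏ i : Fin n, u j i.succ ^ (d i.succ - (e' i : ℕ)))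
            * (q e * ∏ i, (u j i.succ / u j 0) ^ (e i : ℕ)) := by
        intro e
        by_cases he : q e = 0
        · simp [he]
        have h1 := hmax e he
        have h2 : u j 0 ^ (d 0 + ∑ i, (e' i : ℕ))
            = u j 0 ^ (d 0 + (∑ i, (e' i : ℕ) - ∑ i, (e i : ℕ))) * u j 0 ^ (∑ i, (e i : ℕ)) := by
          rw [← pow_add]
          congr 1
          omega
        rw [Fin.prod_univ_succ]
        simp only [f, Fin.cons_zero, Fin.cons_succ, pow_add, div_pow, Finset.prod_mul_distrib,
          Finset.prod_div_distrib, Finset.prod_pow_eq_pow_sum] at h2 ⊢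
        rw [h2]
        field_simp
      simp_rw [this]
      rw [← Finset.mul_sum, hq j, mul_zero]
  have hsum : ∑ e, q e * ∑ j, ∏ i, u j i ^ f e i = 0 := by
    simp_rw [Finset.mul_sum]
    rw [Finset.sum_comm]
    exact Finset.sum_eq_zero fun j _ => hvan j
  rw [Finset.sum_eq_single e'] at hsum
  · have h1 := h (f e') (hfdeg e' he')
    rw [if_pos hfe', (mul_eq_zero.mp hsum).resolve_left he'] at h1
    simp at h1
  · intro e _ hne
    by_cases he : q e = 0
    · simp [he]
    have h1 := h (f e) (hfdeg e he)
    rw [if_neg fun h => hne (hfd e h)] at h1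
    rw [(mul_eq_zero.mp h1).resolve_left (multinomial_ne_zero _), mul_zero]
  · simp

/-- A product of weighted point configurations with prescribed moments, placed in the chart
`x_0 = 1`, gives a decomposition of the monomial; `γ j` absorbs the weights. -/
theorem exists_decomp {n : ℕ} (d : Fin (n + 1) → ℕ) (hpos : 0 < d 0)
    (a w : (i : Fin n) → Fin (d i.succ + 1) → ℂ)
    (hm : ∀ i, ∀ k ≤ d i.succ + d 0, ∑ x, w i x * a i x ^ k = if k = d i.succ then 1 else 0) :
    ∃ (σ : Fin (∏ i ∈ Finset.univ.erase 0, (d i + 1)) ≃ ((i : Fin n) → Fin (d i.succ + 1)))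
      (γ : Fin (∏ i ∈ Finset.univ.erase 0, (d i + 1)) → ℂ),
      (∀ j, (∀ i x, w i x ≠ 0) → γ j ≠ 0) ∧
      (∏ i, X i ^ d i : MvPolynomial (Fin (n + 1)) ℂ)
        = ∑ j, (∑ i, C (γ j * (Fin.cons 1 fun i => a i (σ j i) : Fin (n + 1) → ℂ) i) * X i)
            ^ (∑ i, d i) := by
  have hcard : Fintype.card ((i : Fin n) → Fin (d i.succ + 1))
      = ∏ i ∈ Finset.univ.erase 0, (d i + 1) := by
    rw [← Finset.compl_singleton, ← Fin.image_succ_univ,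
      Finset.prod_image (fun _ _ _ _ h => Fin.succ_injective _ h)]
    simp
  have hD : 0 < ∑ i, d i := by
    rw [Fin.sum_univ_succ]
    omega
  let σ := (Fintype.equivFinOfCardEq hcard).symm
  choose γ hγ using fun j => IsAlgClosed.exists_pow_nat_eq
    ((∏ i, w i (σ j i)) / (Nat.multinomial Finset.univ d : ℂ)) hD
  refine ⟨σ, γ, fun j hw h0 => ?_, ?_⟩
  · have := hγ j
    rw [h0, zero_pow hD.ne'] at this
    exact div_ne_zero (Finset.prod_ne_zero_iff.mpr fun i _ => hw i _) (multinomial_ne_zero d)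
      this.symm
  rw [decomp_iff d fun j i => γ j * (Fin.cons 1 fun i => a i (σ j i) : Fin (n + 1) → ℂ) i]
  intro k hk
  have hpow : ∑ j, ∏ i, (γ j * (Fin.cons 1 fun i => a i (σ j i) : Fin (n + 1) → ℂ) i) ^ k i
      = (∏ i : Fin n, ∑ x, w i x * a i x ^ k i.succ) / (Nat.multinomial Finset.univ d : ℂ) := by
    rw [Finset.prod_univ_sum, Fintype.piFinset_univ, Finset.sum_div, ← Equiv.sum_comp σ]
    refine Finset.sum_congr rfl fun j _ => ?_
    simp only [mul_pow, Finset.prod_mul_distrib]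
    rw [Finset.prod_pow_eq_pow_sum, hk, hγ, Fin.prod_univ_succ]
    simp only [Fin.cons_zero, Fin.cons_succ, one_pow, one_mul]
    ring
  rw [hpow]
  by_cases hkd : k = d
  · subst hkd
    rw [if_pos rfl, Finset.prod_eq_one, mul_one_div_cancel (multinomial_ne_zero _)]
    intro i _
    rw [hm i _ (by omega), if_pos rfl]
  rw [if_neg hkd]
  have hzero : ∃ i : Fin n, k i.succ ≤ d i.succ + d 0 ∧ k i.succ ≠ d i.succ := by
    by_cases hlt : ∃ i : Fin n, k i.succ < d i.succ
    · obtain ⟨i, hi⟩ := hlt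
      exact ⟨i, by omega, by omega⟩
    push Not at hlt
    rw [Fin.sum_univ_succ, Fin.sum_univ_succ] at hk
    by_contra! hall
    have hle : ∀ i : Fin n, k i.succ ≤ d i.succ + d 0 := by
      intro i
      have h1 := Finset.add_sum_erase Finset.univ (fun i : Fin n => k i.succ) (Finset.mem_univ i)
      have h2 := Finset.add_sum_erase Finset.univ (fun i : Fin n => d i.succ) (Finset.mem_univ i)
      have h3 : ∑ i ∈ Finset.univ.erase i, d (Fin.succ i) ≤ ∑ i ∈ Finset.univ.erase i, k i.succ :=
        Finset.sum_le_sum fun i _ => hlt i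
      omega
    have heq : ∀ i : Fin n, k i.succ = d i.succ := fun i => hall i (hle i)
    refine hkd (funext fun i => Fin.cases ?_ heq i)
    simp only [heq] at hk
    omega
  obtain ⟨i, hi1, hi2⟩ := hzero
  rw [Finset.prod_eq_zero (Finset.mem_univ i) (by rw [hm i _ hi1, if_neg hi2]), zero_div, mul_zero]

theorem sum_pow_root {N : ℕ} {ζ : ℂ} (hζ : IsPrimitiveRoot ζ N) (k : ℕ) :
    ∑ x : Fin N, (ζ ^ (x : ℕ)) ^ k = if N ∣ k then (N : ℂ) else 0 := by
  have h1 : ∑ x : Fin N, (ζ ^ (x : ℕ)) ^ k = ∑ x ∈ Finset.range N, (ζ ^ k) ^ x := by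
    rw [Finset.sum_range]
    exact Finset.sum_congr rfl fun x _ => pow_right_comm _ _ _
  rw [h1]
  split_ifs with h
  · rw [(hζ.pow_eq_one_iff_dvd k).mpr h]
    simp
  · have h2 := mul_geom_sum (ζ ^ k) N
    rw [pow_right_comm, hζ.pow_eq_one, one_pow, sub_self] at h2
    exact (mul_eq_zero.mp h2).resolve_left
      (sub_ne_zero.mpr fun hk => h ((hζ.pow_eq_one_iff_dvd k).mp hk))

/-- The `(D+1)`-st roots of unity `a`, with weights `a / (D + 1) = 1 / p'(a)` for
`p = t ^ (D + 1) - 1`. -/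
theorem exists_moments_s17 (D c : ℕ) (hc : c ≤ D) : ∃ a w : Fin (D + 1) → ℂ,
    (∀ x, a x ≠ 0) ∧ (∀ x, w x ≠ 0) ∧
      ∀ k ≤ D + c, ∑ x, w x * a x ^ k = if k = D then 1 else 0 := by
  have hζ := Complex.isPrimitiveRoot_exp (D + 1) (by omega)
  set ζ := Complex.exp (2 * Real.pi * Complex.I / ((D + 1 : ℕ) : ℂ))
  have h0 : ζ ≠ 0 := hζ.ne_zero (by omega)
  have hD : ((D + 1 : ℕ) : ℂ) ≠ 0 := Nat.cast_ne_zero.mpr (by omega)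
  refine ⟨fun x => ζ ^ (x : ℕ), fun x => ζ ^ (x : ℕ) / ((D + 1 : ℕ) : ℂ),
    fun x => pow_ne_zero _ h0, fun x => div_ne_zero (pow_ne_zero _ h0) hD, fun k hk => ?_⟩
  have h1 : ∑ x : Fin (D + 1), ζ ^ (x : ℕ) / ((D + 1 : ℕ) : ℂ) * (ζ ^ (x : ℕ)) ^ k
      = (∑ x : Fin (D + 1), (ζ ^ (x : ℕ)) ^ (k + 1)) / ((D + 1 : ℕ) : ℂ) := by
    rw [Finset.sum_div]
    exact Finset.sum_congr rfl fun x _ => by ring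
  have h2 : D + 1 ∣ k + 1 ↔ k = D := by
    constructor
    · intro h
      have h3 : D + 1 ≤ k + 1 := Nat.le_of_dvd (by omega) h
      have h4 : D + 1 ∣ k - D := by
        have := Nat.dvd_sub h (dvd_refl (D + 1))
        rwa [show k + 1 - (D + 1) = k - D by omega] at this
      have := Nat.eq_zero_of_dvd_of_lt h4 (by omega)
      omega
    · rintro rfl
      exact dvd_rfl
  rw [h1, sum_pow_root hζ]
  simp only [h2]
  split_ifs
  · exact div_self hD
  · exact zero_div _

/-- The point `0` together with the `D`-th roots of unity, weighted by `1 / p'` for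
`p = t ^ (D + 1) - t`. -/
theorem exists_moments_zero (D c : ℕ) (hc : c < D) : ∃ a w : Fin (D + 1) → ℂ,
    (∃ x, a x = 0) ∧ ∀ k ≤ D + c, ∑ x, w x * a x ^ k = if k = D then 1 else 0 := by
  have hζ := Complex.isPrimitiveRoot_exp D (by omega)
  set ζ := Complex.exp (2 * Real.pi * Complex.I / (D : ℂ))
  have hD : (D : ℂ) ≠ 0 := Nat.cast_ne_zero.mpr (by omega)
  refine ⟨Fin.cons 0 fun x => ζ ^ (x : ℕ), Fin.cons (-1) fun _ => 1 / (D : ℂ),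
    ⟨0, rfl⟩, fun k hk => ?_⟩
  rw [Fin.sum_univ_succ]
  simp only [Fin.cons_zero, Fin.cons_succ]
  rw [← Finset.mul_sum, sum_pow_root hζ]
  have h2 : D ∣ k ↔ k = 0 ∨ k = D := by
    constructor
    · rintro ⟨m, rfl⟩
      have : m < 2 := by
        by_contra! h
        nlinarith
      interval_cases m <;> simp
    · rintro (rfl | rfl) <;> simp
  simp only [h2]
  rcases Nat.eq_zero_or_pos k with rfl | hk0
  · have : (0 : ℕ) ≠ D := by omega
    simp [this, hD]
  · by_cases hkD : k = D
    · subst hkD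
      simp [hD, hk0.ne']
    · simp [hk0.ne', hkD]

/-- Non-uniqueness up to scaling for monomials with non-equal exponents: if
`0 < d_0 ≤ ⋯ ≤ d_n` and `d_0 < d_n`, then there are two Waring decompositions of
`F = x_0^{d_0} ⋯ x_n^{d_n}` into `r = (d_1+1)⋯(d_n+1)` powers of linear forms
(`r` being the Waring rank) such that no scaling `x_i ↦ λ_i x_i` with all `λ_i ≠ 0` and
`∏ λ_i^{d_i} = 1` maps the point set `{[ℓ_1],…,[ℓ_r]} ⊂ ℙ^n` onto `{[m_1],…,[m_r]}`. -/
theorem torus_action_not_transitive (n : ℕ) (hn : 1 ≤ n)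
    (d : Fin (n + 1) → ℕ) (hmono : Monotone d) (hpos : 0 < d 0)
    (hne : d 0 < d (Fin.last n)) :
    IsLeast {s : ℕ | ∃ u : Fin s → (Fin (n + 1) → ℂ),
        (∏ i, X i ^ d i : MvPolynomial (Fin (n + 1)) ℂ)
          = ∑ j, (∑ i, C (u j i) * X i) ^ (∑ i, d i)}
      (∏ i ∈ Finset.univ.erase 0, (d i + 1)) ∧
    ∃ ℓ m : Fin (∏ i ∈ Finset.univ.erase 0, (d i + 1)) → (Fin (n + 1) → ℂ),
      (∏ i, X i ^ d i : MvPolynomial (Fin (n + 1)) ℂ)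
        = ∑ j, (∑ i, C (ℓ j i) * X i) ^ (∑ i, d i) ∧
      (∏ i, X i ^ d i : MvPolynomial (Fin (n + 1)) ℂ)
        = ∑ j, (∑ i, C (m j i) * X i) ^ (∑ i, d i) ∧
      ¬ ∃ Λ : Fin (n + 1) → ℂ, (∀ i, Λ i ≠ 0) ∧ (∏ i, Λ i ^ d i) = 1 ∧
        (∀ j, ∃ (j' : _) (c : ℂ), c ≠ 0 ∧ (fun i => Λ i * ℓ j i) = c • m j') ∧
        (∀ j', ∃ (j : _) (c : ℂ), c ≠ 0 ∧ (fun i => Λ i * ℓ j i) = c • m j') := by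
  obtain ⟨N, rfl⟩ : ∃ N, n = N + 1 := ⟨n - 1, by omega⟩
  choose a w ha hw hm using fun i : Fin (N + 1) =>
    exists_moments_s17 (d i.succ) (d 0) (hmono (Fin.zero_le _))
  obtain ⟨σ, γ, hγ, hℓ⟩ := exists_decomp d hpos a w hm
  have hcard : ∏ i ∈ Finset.univ.erase 0, (d i + 1) = ∏ i : Fin (N + 1), (d i.succ + 1) := by
    rw [← Finset.compl_singleton, ← Fin.image_succ_univ,
      Finset.prod_image (fun _ _ _ _ h => Fin.succ_injective _ h)]
  refine ⟨⟨⟨_, hℓ⟩, ?_⟩, ?_⟩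
  · rintro s ⟨u, hu⟩
    rw [hcard]
    exact card_le_of_decomp d hpos u hu
  -- The last configuration is replaced by one containing `0`.
  obtain ⟨b, v, ⟨x₀, hx₀⟩, hv⟩ := exists_moments_zero (d (Fin.last N).succ) (d 0) hne
  obtain ⟨τ, δ, -, hm'⟩ := exists_decomp d hpos (Function.update a (Fin.last N) b)
    (Function.update w (Fin.last N) v) (by
      intro i
      by_cases hi : i = Fin.last N
      · subst hi
        simpa using hv
      · simpa [Function.update_of_ne hi] using hm i)
  refine ⟨_, _, hℓ, hm', ?_⟩
  rintro ⟨Λ, hΛ, -, -, hsurj⟩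
  obtain ⟨j, c, -, h⟩ := hsurj (τ.symm (Function.update (fun _ => 0) (Fin.last N) x₀))
  have h1 := congrFun h (Fin.last N).succ
  simp only [Pi.smul_apply, Fin.cons_succ, Equiv.apply_symm_apply, Function.update_self, hx₀,
    mul_zero, smul_zero] at h1
  exact mul_ne_zero (hΛ _) (mul_ne_zero (hγ j hw) (ha _ _)) h1
end

section
/- Let n ≥ 1, k ≥ 1, F = (x_0 x_1 ⋯ x_n)^k, d = (n+1)k, and let F = ℓ_1^d + ⋯ + ℓ_r^d be a Waring decomposition with r = R(F) = (k+1)^n. Let I ⊂ ℂ[α_0,…,α_n] be the homogeneous vanishing ideal of {[ℓ_1],…,[ℓ_r]} ⊂ ℙ^n. Then there exist NONZERO scalars c_1,…,c_n ∈ ℂ* such that I = (α_1^{k+1} − c_1 α_0^{k+1}, …, α_n^{k+1} − c_n α_0^{k+1}). -/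
open MvPolynomial

/-!
Comparing coefficients in `∏ X_i ^ k = ∑ ℓ_j ^ d`, `d = (n + 1) k`, gives the moments of the points:
`∑_j ∏_i ℓ_{j,i} ^ a_i` vanishes for every exponent vector `a` of degree `d`, except for
`a = (k, …, k)`, where it is nonzero. With `y_j = (ℓ_{j,1}, …, ℓ_{j,n}) / ℓ_{j,0}` and the weights
`w_j = ℓ_{j,0} ^ d`, this says that `∑_j w_j y_j ^ a` is the coefficient functional of
`y ^ (k, …, k)`, up to a nonzero constant, on polynomials of degree less than `d`, and on those of
degree `d` too if no `ℓ_{j,0}` vanishes (`affine_moments`). This is the apolarity lemma in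
coordinates.

Consequently, if a combination of monomials vanishes on the points, no monomial `y ^ b` with all
exponents at most `k` can occur in it in top degree: multiply by `y ^ ((k, …, k) - b)` and apply the
functional (`coeff_eq_zero`). So the `(k + 1) ^ n` box monomials `y ^ b`, `0 ≤ b_i ≤ k`, are linearly
independent on the set of points with `ℓ_{j,0} ≠ 0` (`box_indep`). As there are only `(k + 1) ^ n`
points, every `ℓ_{j,0}` is nonzero and the box monomials form a basis of the functions on the points.
Expanding `y_i ^ (k + 1)` in this basis, the same degree argument kills all terms but the constant
one, so `y_i ^ (k + 1) = c_i` on the points. If `c_i` were zero, `y_i` would vanish at all points,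
and so would the moment of `(k, …, k)`.

Finally, modulo the binomials `α_i ^ (k + 1) - c_i α_0 ^ (k + 1)` every polynomial is a combination
of box monomials with coefficients in `ℂ[α_0]` (`exists_normal_form`), and if it vanishes on the
lines through the points, then these coefficients vanish by linear independence.
-/

/-- The moments of a Waring decomposition of `(x_0 ⋯ x_n) ^ k`. -/
lemma projective_moments (n k r : ℕ) (ℓ : Fin r → (Fin (n + 1) → ℂ))
    (hdec : (∏ i, X i ^ k : MvPolynomial (Fin (n + 1)) ℂ)
        = ∑ j, (∑ i, C (ℓ j i) * X i) ^ ((n + 1) * k)) :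
    ∃ K : ℂ, K ≠ 0 ∧ ∀ a : Fin (n + 1) → ℕ, ∑ i, a i = (n + 1) * k →
      ∑ j, ∏ i, ℓ j i ^ a i = if a = fun _ => k then K else 0 := by
  have hcoeff : ∀ a : Fin (n + 1) → ℕ, ∑ i, a i = (n + 1) * k →
      (Nat.multinomial Finset.univ a : ℂ) * ∑ j, ∏ i, ℓ j i ^ a i
        = if a = fun _ => k then 1 else 0 := by
    intro a ha
    have hmon : ∀ b : Fin (n + 1) → ℕ, (∏ i, X i ^ b i : MvPolynomial (Fin (n + 1)) ℂ)
        = monomial (Finsupp.equivFunOnFinite.symm b) 1 := by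
      intro b
      rw [monomial_eq, Finsupp.prod_fintype _ _ (by simp)]
      simp
    have h := congrArg (coeff (Finsupp.equivFunOnFinite.symm a)) hdec
    rw [hmon, coeff_monomial, coeff_sum] at h
    have hR : ∀ j, coeff (Finsupp.equivFunOnFinite.symm a)
        ((∑ i, C (ℓ j i) * X i : MvPolynomial (Fin (n + 1)) ℂ) ^ ((n + 1) * k))
        = (Nat.multinomial Finset.univ a : ℂ) * ∏ i, ℓ j i ^ a i := by
      intro j
      rw [Finset.sum_pow_eq_sum_piAntidiag, coeff_sum, Finset.sum_eq_single a]
      · simp_rw [mul_pow, Finset.prod_mul_distrib, hmon, ← map_pow, ← map_prod]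
        rw [← map_natCast (C : ℂ →+* MvPolynomial (Fin (n + 1)) ℂ), coeff_C_mul, coeff_C_mul,
          coeff_monomial, if_pos rfl, mul_one]
      · intro b _ hb
        simp_rw [mul_pow, Finset.prod_mul_distrib, hmon, ← map_pow, ← map_prod]
        rw [← map_natCast (C : ℂ →+* MvPolynomial (Fin (n + 1)) ℂ), coeff_C_mul, coeff_C_mul,
          coeff_monomial, if_neg (fun h => hb (Finsupp.equivFunOnFinite.symm.injective h))]
        simp
      · intro h
        exact absurd (by simp [ha]) h
    simp_rw [hR, ← Finset.mul_sum] at h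
    rw [← h]
    simp only [EmbeddingLike.apply_eq_iff_eq, eq_comm]
  have hm : ∀ a : Fin (n + 1) → ℕ, (Nat.multinomial Finset.univ a : ℂ) ≠ 0 := fun a =>
    Nat.cast_ne_zero.mpr (Nat.multinomial_pos _ _).ne'
  refine ⟨(Nat.multinomial Finset.univ (fun _ : Fin (n + 1) => k) : ℂ)⁻¹, inv_ne_zero (hm _), ?_⟩
  intro a ha
  have h := hcoeff a ha
  split_ifs with h1
  · rw [if_pos h1, h1] at h
    rw [h1]
    exact eq_inv_of_mul_eq_one_right h
  · rw [if_neg h1] at h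
    exact (mul_eq_zero.mp h).resolve_left (hm a)

/-- The moments in the chart `x_0 ≠ 0`, with weights `ℓ_{j,0} ^ d`. A point with `ℓ_{j,0} = 0` has
weight zero, so that its junk coordinates `x / 0` are harmless, and it does not contribute to the
projective moments with a positive exponent at `x_0` either. -/
lemma affine_moments (n k r : ℕ) (hk : 1 ≤ k) (ℓ : Fin r → (Fin (n + 1) → ℂ))
    (hdec : (∏ i, X i ^ k : MvPolynomial (Fin (n + 1)) ℂ)
        = ∑ j, (∑ i, C (ℓ j i) * X i) ^ ((n + 1) * k)) :
    ∃ K : ℂ, K ≠ 0 ∧ ∀ a : Fin n → ℕ, ∑ i, a i ≤ (n + 1) * k →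
      (∑ i, a i < (n + 1) * k ∨ ∀ j, ℓ j 0 ≠ 0) →
      ∑ j, ℓ j 0 ^ ((n + 1) * k) * ∏ i, (ℓ j (Fin.succ i) / ℓ j 0) ^ a i
        = if a = fun _ => k then K else 0 := by
  obtain ⟨K, hK, h⟩ := projective_moments n k r ℓ hdec
  refine ⟨K, hK, fun a ha hor => ?_⟩
  have hd : (n + 1) * k ≠ 0 := by positivity
  have h1 := h (Fin.cons ((n + 1) * k - ∑ i, a i) a) (by
    rw [Fin.sum_univ_succ]; simp only [Fin.cons_zero, Fin.cons_succ]; omega)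
  have h2 : ((Fin.cons ((n + 1) * k - ∑ i, a i) a : Fin (n + 1) → ℕ) = fun _ => k)
      ↔ a = fun _ => k := by
    constructor
    · intro h; funext i; simpa using congrFun h i.succ
    · rintro rfl
      funext i
      refine Fin.cases ?_ (fun i => ?_) i
      · simp [add_mul]
      · simp
  simp only [h2] at h1
  rw [← h1]
  refine Finset.sum_congr rfl fun j _ => ?_
  rw [Fin.prod_univ_succ]
  simp only [Fin.cons_zero, Fin.cons_succ]
  by_cases h0 : ℓ j 0 = 0
  · have hlt := hor.resolve_right (fun h => h j h0)
    rw [h0, zero_pow hd, zero_pow (by omega)]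
    simp
  · simp_rw [div_pow]
    rw [Finset.prod_div_distrib, Finset.prod_pow_eq_pow_sum]
    have : ℓ j 0 ^ ((n + 1) * k) = ℓ j 0 ^ ((n + 1) * k - ∑ i, a i) * ℓ j 0 ^ (∑ i, a i) := by
      rw [← pow_add]; congr 1; omega
    rw [this]
    field_simp

/-- If a combination of monomials `y ^ (e s)` vanishes at all weighted points, and multiplication by
`y ^ ((k, …, k) - e b)` keeps every occurring monomial in the range where the functional `hM` is known,
then the coefficient of the box monomial `y ^ (e b)` is zero. -/
lemma coeff_eq_zero {n k r d : ℕ} {w : Fin r → ℂ} {y : Fin r → Fin n → ℂ} {K : ℂ} (hK : K ≠ 0)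
    {D : ℕ} (hM : ∀ a : Fin n → ℕ, ∑ i, a i ≤ D →
      ∑ j, w j * ∏ i, y j i ^ a i = if a = fun _ => k then K else 0)
    {ι : Type*} [Fintype ι] (e : ι → Fin n → ℕ) (he : Function.Injective e) (c : ι → ℂ)
    (hc : ∀ j, w j * ∑ s, c s * ∏ i, y j i ^ e s i = 0)
    (b : ι) (hb : ∀ i, e b i ≤ k) (hd : ∑ i, e b i = d)
    (hdeg : ∀ s, c s ≠ 0 → ∑ i, e s i + n * k ≤ D + d) : c b = 0 := by
  have hsum : ∑ i, (k - e b i) + d = n * k := by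
    rw [← hd, ← Finset.sum_add_distrib, Finset.sum_congr rfl fun i _ => Nat.sub_add_cancel (hb i)]
    simp
  have h1 : ∑ s, c s * ∑ j, w j * ∏ i, y j i ^ (e s i + (k - e b i)) = 0 := by
    have h2 : ∑ j, (w j * ∑ s, c s * ∏ i, y j i ^ e s i) * ∏ i, y j i ^ (k - e b i) = 0 := by
      simp [hc]
    rw [← h2]
    simp_rw [Finset.mul_sum, Finset.sum_mul]
    rw [Finset.sum_comm]
    refine Finset.sum_congr rfl fun j _ => Finset.sum_congr rfl fun s _ => ?_
    simp_rw [pow_add, Finset.prod_mul_distrib]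
    ring
  rw [Finset.sum_eq_single b] at h1
  · by_contra hcb
    have hdb := hdeg b hcb
    rw [hM _ (by rw [Finset.sum_add_distrib]; omega),
      if_pos (by funext i; have := hb i; omega)] at h1
    exact (mul_ne_zero hcb hK) h1
  · intro s _ hs
    by_cases hcs : c s = 0
    · simp [hcs]
    have hds := hdeg s hcs
    rw [hM _ (by rw [Finset.sum_add_distrib]; omega), if_neg, mul_zero]
    intro h
    apply hs
    apply he
    funext i
    have h2 : e s i + (k - e b i) = k := congrFun h i
    have := hb i
    omega
  · simp

lemma box_inj (n k : ℕ) :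
    Function.Injective (fun (b : Fin n → Fin (k + 1)) (i : Fin n) => (b i : ℕ)) := by
  intro a b h
  funext i
  exact Fin.ext (congrFun h i)

/-- The box monomials are linearly independent on the points of nonzero weight. -/
lemma box_indep {n k r : ℕ} {w : Fin r → ℂ} {y : Fin r → Fin n → ℂ} {K : ℂ} (hK : K ≠ 0)
    (hM : ∀ a : Fin n → ℕ, ∑ i, a i ≤ n * k →
      ∑ j, w j * ∏ i, y j i ^ a i = if a = fun _ => k then K else 0)
    (c : (Fin n → Fin (k + 1)) → ℂ)
    (hc : ∀ j, w j * ∑ b, c b * ∏ i, y j i ^ (b i : ℕ) = 0) : c = 0 := by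
  by_contra hne
  obtain ⟨b0, hb0⟩ := Function.ne_iff.mp hne
  obtain ⟨b, hb, hmax⟩ := Finset.exists_max_image
    (Finset.univ.filter fun b => c b ≠ 0) (fun b => ∑ i, (b i : ℕ)) ⟨b0, by simpa using hb0⟩
  simp only [Finset.mem_filter, Finset.mem_univ, true_and] at hb hmax
  have key := coeff_eq_zero (ι := Fin n → Fin (k + 1)) hK hM (fun b i => (b i : ℕ))
    (box_inj n k) c hc b
    (fun i => Nat.lt_succ_iff.mp (b i).2) rfl (fun s hs => by
      have := hmax s hs
      omega)
  exact hb key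

/-- A function `y_i ^ (k + 1)` that is a combination of box monomials on the points is constant. -/
lemma pow_const {n k r : ℕ} {w : Fin r → ℂ} {y : Fin r → Fin n → ℂ} {K : ℂ} (hK : K ≠ 0)
    (hM : ∀ a : Fin n → ℕ, ∑ i, a i ≤ n * k + k →
      ∑ j, w j * ∏ i, y j i ^ a i = if a = fun _ => k then K else 0)
    (c : (Fin n → Fin (k + 1)) → ℂ) (i : Fin n)
    (hc : ∀ j, y j i ^ (k + 1) = ∑ b, c b * ∏ i, y j i ^ (b i : ℕ)) :
    ∀ j, y j i ^ (k + 1) = c 0 := by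
  suffices hz : ∀ b, b ≠ 0 → c b = 0 by
    intro j
    rw [hc j, Finset.sum_eq_single 0]
    · simp
    · intro b _ hb
      simp [hz b hb]
    · simp
  by_contra! hne
  obtain ⟨b0, hb0, hcb0⟩ := hne
  obtain ⟨b, hb, hmax⟩ := Finset.exists_max_image
    (Finset.univ.filter fun b => b ≠ 0 ∧ c b ≠ 0) (fun b => ∑ i, (b i : ℕ)) ⟨b0, by simp [hb0, hcb0]⟩
  simp only [Finset.mem_filter, Finset.mem_univ, true_and] at hb hmax
  have hpos : 1 ≤ ∑ i, (b i : ℕ) := by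
    by_contra hlt
    have h0 : ∑ i, (b i : ℕ) = 0 := by omega
    apply hb.1
    funext i
    exact Fin.ext (Finset.sum_eq_zero_iff.mp h0 i (Finset.mem_univ i))
  -- The index `none` stands for the monomial `y_i ^ (k + 1)`, which lies outside the box.
  have key := coeff_eq_zero (ι := Option (Fin n → Fin (k + 1))) hK hM
    (fun s => s.elim (Pi.single i (k + 1)) (fun b i => (b i : ℕ)))
    (by
      rintro (_ | s) (_ | t) h
      · rfl
      · have := congrFun h i
        simp at this
        have := (t i).2
        omega
      · have := congrFun h i
        simp at this
        have := (s i).2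
        omega
      · exact congrArg some (box_inj n k h))
    (fun s => s.elim (-1) c)
    (by
      intro j
      rw [Fintype.sum_option]
      have : ∏ i', y j i' ^ (Pi.single i (k + 1) : Fin n → ℕ) i' = y j i ^ (k + 1) := by
        rw [Finset.prod_eq_single i]
        · simp
        · intro i' _ h
          simp [Pi.single_eq_of_ne h]
        · simp
      simp only [Option.elim_none, Option.elim_some]
      rw [this, ← hc j]
      ring)
    (some b) (fun i => Nat.lt_succ_iff.mp (b i).2) rfl
    (by
      rintro (_ | s) hs
      · simp only [Option.elim_none, Option.elim_some]
        rw [Finset.sum_pi_single']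
        simp
        omega
      · simp only [Option.elim_some] at hs ⊢
        by_cases hs0 : s = 0
        · simp [hs0]
          omega
        · have := hmax s ⟨hs0, hs⟩
          omega)
  exact hb.2 key

/-- Normal forms modulo the binomials: box monomials with coefficients in `ℂ[α_0]`. -/
lemma exists_normal_form (n k : ℕ) (c : Fin n → ℂ) (p : MvPolynomial (Fin (n + 1)) ℂ) :
    ∃ f : (Fin n → Fin (k + 1)) → Polynomial ℂ,
      p - ∑ b, Polynomial.aeval (X 0 : MvPolynomial (Fin (n + 1)) ℂ) (f b)
          * ∏ i, X (Fin.succ i) ^ (b i : ℕ) ∈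
        Ideal.span (Set.range fun i : Fin n =>
          (X i.succ ^ (k + 1) - C (c i) * X 0 ^ (k + 1) : MvPolynomial (Fin (n + 1)) ℂ)) := by
  set J := Ideal.span (Set.range fun i : Fin n =>
          (X i.succ ^ (k + 1) - C (c i) * X 0 ^ (k + 1) : MvPolynomial (Fin (n + 1)) ℂ)) with hJ
  induction p using MvPolynomial.induction_on' with
  | monomial u a =>
    -- Divide each exponent by `k + 1` with remainder.
    refine ⟨Pi.single (fun i => ⟨u i.succ % (k + 1), Nat.mod_lt _ k.succ_pos⟩)
      (Polynomial.C (a * ∏ i : Fin n, c i ^ (u i.succ / (k + 1))) *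
        Polynomial.X ^ (u 0 + ∑ i : Fin n, (k + 1) * (u i.succ / (k + 1)))), ?_⟩
    rw [Finset.sum_eq_single fun i => ⟨u i.succ % (k + 1), Nat.mod_lt _ k.succ_pos⟩]
    · rw [Pi.single_eq_same, ← Ideal.Quotient.eq, monomial_eq, Finsupp.prod_fintype _ _ (by simp),
        Fin.prod_univ_succ]
      have hrel : ∀ i : Fin n, Ideal.Quotient.mk J (X i.succ) ^ (k + 1)
          = Ideal.Quotient.mk J (C (c i)) * Ideal.Quotient.mk J (X 0) ^ (k + 1) := by
        intro i
        rw [← map_pow, ← map_pow, ← map_mul, Ideal.Quotient.eq]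
        exact Ideal.subset_span ⟨i, rfl⟩
      have hpow : ∀ i : Fin n, Ideal.Quotient.mk J (X i.succ) ^ (u i.succ)
          = Ideal.Quotient.mk J (C (c i)) ^ (u i.succ / (k + 1))
            * Ideal.Quotient.mk J (X 0) ^ ((k + 1) * (u i.succ / (k + 1)))
            * Ideal.Quotient.mk J (X i.succ) ^ (u i.succ % (k + 1)) := by
        intro i
        conv_lhs => rw [← Nat.div_add_mod (u i.succ) (k + 1)]
        rw [pow_add, pow_mul, hrel, mul_pow, ← pow_mul]
      simp only [map_mul, map_prod, map_pow, hpow, Finset.prod_mul_distrib, Polynomial.aeval_C,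
        Polynomial.aeval_X, MvPolynomial.algebraMap_eq, pow_add, Finset.prod_pow_eq_pow_sum]
      ring
    · intro b _ hb
      rw [Pi.single_eq_of_ne hb]
      simp
    · simp
  | add p q hp hq =>
    obtain ⟨f, hf⟩ := hp
    obtain ⟨g, hg⟩ := hq
    refine ⟨f + g, ?_⟩
    have := J.add_mem hf hg
    convert this using 1
    simp only [Pi.add_apply, map_add, add_mul, Finset.sum_add_distrib]
    ring

/-- For `F = (x_0 ⋯ x_n)^k` and a Waring decomposition `F = ℓ_1^d + ⋯ + ℓ_r^d`
(`d = (n+1)k`, `r = R(F) = (k+1)^n`), the homogeneous vanishing ideal `I` of the points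
`{[ℓ_1],…,[ℓ_r]} ⊂ ℙ^n` is `I = (α_1^{k+1} − c_1 α_0^{k+1}, …, α_n^{k+1} − c_n α_0^{k+1})`
for some nonzero scalars `c_1,…,c_n`. -/
theorem vanishing_ideal_for_equal_exponents (n k : ℕ) (hn : 1 ≤ n) (hk : 1 ≤ k)
    (r : ℕ) (hr : r = (k + 1) ^ n)
    (ℓ : Fin r → (Fin (n + 1) → ℂ))
    (hdec : (∏ i, X i ^ k : MvPolynomial (Fin (n + 1)) ℂ)
        = ∑ j, (∑ i, C (ℓ j i) * X i) ^ ((n + 1) * k))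
    (hmin : IsLeast {s : ℕ | ∃ u : Fin s → (Fin (n + 1) → ℂ),
        (∏ i, X i ^ k : MvPolynomial (Fin (n + 1)) ℂ)
          = ∑ j, (∑ i, C (u j i) * X i) ^ ((n + 1) * k)} r)
    (I : Ideal (MvPolynomial (Fin (n + 1)) ℂ))
    (hI : ∀ p : MvPolynomial (Fin (n + 1)) ℂ,
      p ∈ I ↔ ∀ (j : Fin r) (c : ℂ), c ≠ 0 → eval (fun i => c * ℓ j i) p = 0) :
    ∃ c : Fin n → ℂ, (∀ i, c i ≠ 0) ∧
      I = Ideal.span (Set.range fun i : Fin n =>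
        X i.succ ^ (k + 1) - C (c i) * X 0 ^ (k + 1)) := by
  classical
  obtain ⟨K, hK, hM⟩ := affine_moments n k r hk ℓ hdec
  set w : Fin r → ℂ := fun j => ℓ j 0 ^ ((n + 1) * k) with hw
  set y : Fin r → Fin n → ℂ := fun j i => ℓ j i.succ / ℓ j 0 with hy
  have hdk : (n + 1) * k = n * k + k := by ring
  have hind : ∀ c : (Fin n → Fin (k + 1)) → ℂ,
      (∀ j, w j * ∑ b, c b * ∏ i, y j i ^ (b i : ℕ) = 0) → c = 0 := fun c hc =>
    box_indep hK (fun a ha => hM a (by omega) (Or.inl (by omega))) c hc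
  let v : (Fin n → Fin (k + 1)) → ({j : Fin r // ℓ j 0 ≠ 0} → ℂ) :=
    fun b j => ∏ i, y j i ^ (b i : ℕ)
  have hv : LinearIndependent ℂ v := by
    rw [Fintype.linearIndependent_iff]
    intro g hg
    refine congrFun (hind g fun j => ?_)
    by_cases h0 : ℓ j 0 = 0
    · have hw0 : w j = 0 := by
        simp only [hw, h0]
        exact zero_pow (by positivity)
      rw [hw0, zero_mul]
    · have := congrFun hg ⟨j, h0⟩
      simp only [Finset.sum_apply, Pi.smul_apply, smul_eq_mul, Pi.zero_apply, v] at this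
      rw [this, mul_zero]
  have hcard : Fintype.card (Fin n → Fin (k + 1)) = r := by simp [hr]
  have hsub : Fintype.card {j : Fin r // ℓ j 0 ≠ 0} ≤ r := by
    simpa only [Fintype.card_fin] using Fintype.card_subtype_le (fun j : Fin r => ℓ j 0 ≠ 0)
  have hle := hv.fintype_card_le_finrank
  rw [Module.finrank_fintype_fun_eq_card] at hle
  have hall : ∀ j, ℓ j 0 ≠ 0 := by
    intro j hj
    have := Fintype.card_subtype_lt (p := fun j : Fin r => ℓ j 0 ≠ 0) (x := j) (by simpa using hj)
    rw [Fintype.card_fin] at this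
    omega
  have hspan : Submodule.span ℂ (Set.range v) = ⊤ :=
    hv.span_eq_top_of_card_eq_finrank' (by
      rw [Module.finrank_fintype_fun_eq_card]; omega)
  have hpow : ∀ i : Fin n, ∃ c : ℂ, ∀ j, y j i ^ (k + 1) = c := by
    intro i
    have hmem : (fun j : {j : Fin r // ℓ j 0 ≠ 0} => y j i ^ (k + 1))
        ∈ Submodule.span ℂ (Set.range v) := by rw [hspan]; trivial
    obtain ⟨c, hc⟩ := (Submodule.mem_span_range_iff_exists_fun ℂ).mp hmem
    refine ⟨c 0, pow_const hK (fun a ha => hM a (by omega) (Or.inr hall)) c i fun j => ?_⟩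
    have := congrFun hc ⟨j, hall j⟩
    simp only [Finset.sum_apply, Pi.smul_apply, smul_eq_mul, v] at this
    exact this.symm
  choose c hc using hpow
  have hyl : ∀ j i, ℓ j (Fin.succ i) = ℓ j 0 * y j i := by
    intro j i
    simp only [hy]
    field_simp [hall j]
  have hsubI : Ideal.span (Set.range fun i : Fin n =>
      (X i.succ ^ (k + 1) - C (c i) * X 0 ^ (k + 1) : MvPolynomial (Fin (n + 1)) ℂ)) ≤ I := by
    rw [Ideal.span_le]
    rintro _ ⟨i, rfl⟩
    refine (hI _).mpr fun j t _ => ?_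
    simp only [map_sub, map_mul, map_pow, eval_X, eval_C]
    rw [hyl, ← hc i j]
    ring
  refine ⟨c, fun i hi => ?_, le_antisymm (fun p hp => ?_) hsubI⟩
  · have h := hM (fun _ => k) (by simp [hdk]) (Or.inr hall)
    rw [if_pos rfl] at h
    refine hK (h.symm.trans (Finset.sum_eq_zero fun j _ => ?_))
    have h0 : ℓ j i.succ / ℓ j 0 = 0 :=
      pow_eq_zero_iff (k.succ_ne_zero) |>.mp ((hc i j).trans hi)
    rw [Finset.prod_eq_zero (Finset.mem_univ i), mul_zero]
    rw [h0, zero_pow (by omega)]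
  · obtain ⟨f, hf⟩ := exists_normal_form n k c p
    have hq := I.sub_mem hp (hsubI hf)
    rw [sub_sub_cancel, hI] at hq
    have hf0 : ∀ b, f b = 0 := by
      intro b
      refine Polynomial.eq_zero_of_infinite_isRoot _
        (Set.Infinite.mono (fun t ht => ?_) (Set.finite_singleton (0 : ℂ)).infinite_compl)
      have ht0 : t ≠ 0 := by simpa using ht
      -- Evaluate at the representatives `t • (1, y_j)` and separate the box monomials.
      have h := congrFun (hind (fun b => (f b).eval t * t ^ (∑ i, (b i : ℕ))) fun j => by
        have hqj := hq j (t / ℓ j 0) (div_ne_zero ht0 (hall j))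
        rw [map_sum] at hqj
        rw [mul_eq_zero]
        right
        rw [← hqj]
        refine Finset.sum_congr rfl fun b _ => ?_
        have h0 : t / ℓ j 0 * ℓ j 0 = t := div_mul_cancel₀ _ (hall j)
        have hi : ∀ i : Fin n, t / ℓ j 0 * ℓ j i.succ = t * y j i := by
          intro i
          rw [hyl, ← mul_assoc, h0]
        have he : ∀ g : Polynomial ℂ, eval (fun i => t / ℓ j 0 * ℓ j i)
            (Polynomial.aeval (X 0 : MvPolynomial (Fin (n + 1)) ℂ) g) = g.eval t := by
          intro g
          rw [Polynomial.aeval_def, Polynomial.hom_eval₂, eval_X, h0]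
          have : (eval fun i => t / ℓ j 0 * ℓ j i).comp
              (algebraMap ℂ (MvPolynomial (Fin (n + 1)) ℂ)) = RingHom.id ℂ := by
            ext x; simp [MvPolynomial.algebraMap_eq]
          rw [this, Polynomial.eval₂_id]
        simp only [map_mul, map_prod, map_pow, eval_X, he, hi, mul_pow, Finset.prod_mul_distrib,
          Finset.prod_pow_eq_pow_sum]
        ring) b
      exact (mul_eq_zero.mp h).resolve_right (pow_ne_zero _ ht0)
    simpa only [hf0, map_zero, zero_mul, Finset.sum_const_zero, sub_zero] using hf
end
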